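/- Let f: (L,d,λ) → (L′,d′,λ′) and f′: (L′,d′,λ′) → (L″,d″,λ″) be weak morphisms of weak Lie 3-algebras over a commutative ring k. Then their composition f′∘f, with the components given in the context, is a weak morphism (L,d,λ) → (L″,d″,λ″), i.e. its components satisfy equations (M1)–(M8) with respect to λ and λ″. -/

import Mathlib

namespace WL3

open Finset

/-! ## Graded multilinear maps -/

/-- Cast along an equality of degrees. -/
def gcast {M : ℤ → Type} {i j : ℤ} (h : i = j) (x : M i) : M j := h ▸ x

/-- A degree-`r`, arity-`m` map between ℤ-graded types, given by its components on
homogeneous tuples: its component at degrees `d` maps `L (d 1) ⊗ ⋯ ⊗ L (d m)` to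
`M (r + d 1 + ⋯ + d m)`. -/
abbrev MMap (L M : ℤ → Type) (m : ℕ) (r : ℤ) : Type :=
  ∀ d : Fin m → ℤ, (∀ j, L (d j)) → M (r + ∑ j, d j)

variable {L M N : ℤ → Type}

/-- Cast an `MMap` along equalities of arities and degrees. -/
def mcast {m m' : ℕ} {r r' : ℤ} (hm : m = m') (hr : r = r') (μ : MMap L M m r) :
    MMap L M m' r' := by subst hm; subst hr; exact μ

/-- Koszul sign of the permutation `σ` acting on a tuple of homogeneous elements of
degrees `d`: `∏_{i<j, σ i > σ j} (-1)^(d i · d j)`. -/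
def koszulSign {m : ℕ} (d : Fin m → ℤ) (σ : Equiv.Perm (Fin m)) : ℤ :=
  ∏ p ∈ Finset.univ.filter (fun p : Fin m × Fin m => p.1 < p.2 ∧ σ p.2 < σ p.1),
    (-1 : ℤ) ^ (d p.1 * d p.2).natAbs

/-- The action `μ ↦ μ^σ`, `μ^σ(x₁,…,x_m) = ε(σ;x)·μ(x_{σ⁻¹1},…,x_{σ⁻¹m})`. -/
def pa [∀ i, AddCommGroup (M i)] {m : ℕ} {r : ℤ} (σ : Equiv.Perm (Fin m)) (μ : MMap L M m r) :
    MMap L M m r := fun d x =>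
  koszulSign d σ •
    gcast (by rw [Equiv.sum_comp σ.symm d])
      (μ (fun j => d (σ.symm j)) (fun j => x (σ.symm j)))

/-- Degrees of the outer map in a partial composition. -/
def outDeg (m₁ m₂ n : ℕ) (s : ℤ) (d : Fin (m₁ + n + m₂) → ℤ) : Fin (m₁ + 1 + m₂) → ℤ :=
  Fin.append
    (Fin.append (fun j : Fin m₁ => d (Fin.castAdd m₂ (Fin.castAdd n j)))
      (fun _ : Fin 1 => s + ∑ j : Fin n, d (Fin.castAdd m₂ (Fin.natAdd m₁ j))))
    (fun j : Fin m₂ => d (Fin.natAdd (m₁ + n) j))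

theorem outDeg_left (m₁ m₂ n : ℕ) (s : ℤ) (d : Fin (m₁ + n + m₂) → ℤ) (j : Fin m₁) :
    outDeg m₁ m₂ n s d (Fin.castAdd m₂ (Fin.castAdd 1 j))
      = d (Fin.castAdd m₂ (Fin.castAdd n j)) := by
  simp [outDeg, Fin.append_left]

theorem outDeg_mid (m₁ m₂ n : ℕ) (s : ℤ) (d : Fin (m₁ + n + m₂) → ℤ) (j : Fin 1) :
    outDeg m₁ m₂ n s d (Fin.castAdd m₂ (Fin.natAdd m₁ j))
      = s + ∑ j : Fin n, d (Fin.castAdd m₂ (Fin.natAdd m₁ j)) := by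
  simp [outDeg, Fin.append_left, Fin.append_right]

theorem outDeg_right (m₁ m₂ n : ℕ) (s : ℤ) (d : Fin (m₁ + n + m₂) → ℤ) (j : Fin m₂) :
    outDeg m₁ m₂ n s d (Fin.natAdd (m₁ + 1) j) = d (Fin.natAdd (m₁ + n) j) := by
  simp [outDeg, Fin.append_right]

theorem outDeg_sum (m₁ m₂ n : ℕ) (r s : ℤ) (d : Fin (m₁ + n + m₂) → ℤ) :
    r + ∑ j, outDeg m₁ m₂ n s d j = (r + s) + ∑ j, d j := by
  simp [outDeg, Fin.sum_univ_add, Fin.append_left, Fin.append_right]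
  ring

/-- Partial (operadic) composition `μ ∘_{m₁+1} ν` of `μ` (of arity `m₁ + 1 + m₂`) with `ν`
inserted in the slot `m₁ + 1`, with the Koszul sign `(-1)^(|ν|·(d 1 + ⋯ + d m₁))`. -/
def pcomp [∀ i, AddCommGroup (L i)] [∀ i, AddCommGroup (M i)] (m₁ m₂ : ℕ) {n : ℕ} {r s : ℤ}
    (μ : MMap L M (m₁ + 1 + m₂) r) (ν : MMap L L n s) : MMap L M (m₁ + n + m₂) (r + s) :=
  fun d x =>
    ((-1 : ℤ) ^ (s * ∑ j : Fin m₁, d (Fin.castAdd m₂ (Fin.castAdd n j))).natAbs) •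
    gcast (outDeg_sum m₁ m₂ n r s d)
      (μ (outDeg m₁ m₂ n s d)
        (fun j => Fin.addCases (motive := fun t => L (outDeg m₁ m₂ n s d t))
          (fun j' => Fin.addCases (motive := fun t => L (outDeg m₁ m₂ n s d (Fin.castAdd m₂ t)))
            (fun j1 => gcast (outDeg_left m₁ m₂ n s d j1).symm
              (x (Fin.castAdd m₂ (Fin.castAdd n j1))))
            (fun j0 => gcast (outDeg_mid m₁ m₂ n s d j0).symm
              (ν (fun j2 => d (Fin.castAdd m₂ (Fin.natAdd m₁ j2)))
                 (fun j2 => x (Fin.castAdd m₂ (Fin.natAdd m₁ j2)))))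
            j')
          (fun j3 => gcast (outDeg_right m₁ m₂ n s d j3).symm (x (Fin.natAdd (m₁ + n) j3)))
          j))

/-- Composition `μ ∘ g` of an arity-1 map with an arity-`a` map. -/
def comp₁ {a : ℕ} {r s : ℤ} (μ : MMap M N 1 r) (g : MMap L M a s) : MMap L N a (r + s) :=
  fun d x =>
    gcast (by rw [Fin.sum_univ_one]; ring)
      (μ (fun _ : Fin 1 => s + ∑ j, d j) (fun _ => g d x))

theorem sum2 (a b : ℕ) (r s₁ s₂ : ℤ) (d : Fin (a + b) → ℤ) :
    r + ∑ t : Fin 2, ![s₁ + ∑ j : Fin a, d (Fin.castAdd b j),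
                       s₂ + ∑ j : Fin b, d (Fin.natAdd a j)] t
      = (r + (s₁ + s₂)) + ∑ j, d j := by
  simp [Fin.sum_univ_two, Fin.sum_univ_add]
  ring

/-- Full composition `μ ∘ (g₁, g₂)` with Koszul signs. -/
def comp₂ [∀ i, AddCommGroup (N i)] {a b : ℕ} {r s₁ s₂ : ℤ}
    (μ : MMap M N 2 r) (g₁ : MMap L M a s₁) (g₂ : MMap L M b s₂) :
    MMap L N (a + b) (r + (s₁ + s₂)) :=
  fun d x =>
    ((-1 : ℤ) ^ (s₂ * ∑ j : Fin a, d (Fin.castAdd b j)).natAbs) •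
    gcast (sum2 a b r s₁ s₂ d)
      (μ ![s₁ + ∑ j : Fin a, d (Fin.castAdd b j), s₂ + ∑ j : Fin b, d (Fin.natAdd a j)]
        (Fin.cons (gcast (by simp) (g₁ (fun j => d (Fin.castAdd b j)) (fun j => x (Fin.castAdd b j))))
          (fun _ : Fin 1 => gcast (by simp) (g₂ (fun j => d (Fin.natAdd a j)) (fun j => x (Fin.natAdd a j))))))

theorem sum3 (a b c : ℕ) (r s₁ s₂ s₃ : ℤ) (d : Fin (a + b + c) → ℤ) :
    r + ∑ t : Fin 3, ![s₁ + ∑ j : Fin a, d (Fin.castAdd c (Fin.castAdd b j)),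
                       s₂ + ∑ j : Fin b, d (Fin.castAdd c (Fin.natAdd a j)),
                       s₃ + ∑ j : Fin c, d (Fin.natAdd (a + b) j)] t
      = (r + (s₁ + s₂ + s₃)) + ∑ j, d j := by
  simp [Fin.sum_univ_three, Fin.sum_univ_add]
  ring

/-- Full composition `μ ∘ (g₁, g₂, g₃)` with Koszul signs. -/
def comp₃ [∀ i, AddCommGroup (N i)] {a b c : ℕ} {r s₁ s₂ s₃ : ℤ}
    (μ : MMap M N 3 r) (g₁ : MMap L M a s₁) (g₂ : MMap L M b s₂) (g₃ : MMap L M c s₃) :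
    MMap L N (a + b + c) (r + (s₁ + s₂ + s₃)) :=
  fun d x =>
    ((-1 : ℤ) ^ (s₂ * (∑ j : Fin a, d (Fin.castAdd c (Fin.castAdd b j)))
        + s₃ * ((∑ j : Fin a, d (Fin.castAdd c (Fin.castAdd b j)))
          + ∑ j : Fin b, d (Fin.castAdd c (Fin.natAdd a j)))).natAbs) •
    gcast (sum3 a b c r s₁ s₂ s₃ d)
      (μ ![s₁ + ∑ j : Fin a, d (Fin.castAdd c (Fin.castAdd b j)),
           s₂ + ∑ j : Fin b, d (Fin.castAdd c (Fin.natAdd a j)),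
           s₃ + ∑ j : Fin c, d (Fin.natAdd (a + b) j)]
        (Fin.cons (gcast (by simp)
            (g₁ (fun j => d (Fin.castAdd c (Fin.castAdd b j)))
                (fun j => x (Fin.castAdd c (Fin.castAdd b j)))))
          (Fin.cons (gcast (by simp)
              (g₂ (fun j => d (Fin.castAdd c (Fin.natAdd a j)))
                  (fun j => x (Fin.castAdd c (Fin.natAdd a j)))))
            (fun _ : Fin 1 => gcast (by simp)
              (g₃ (fun j => d (Fin.natAdd (a + b) j))
                  (fun j => x (Fin.natAdd (a + b) j)))))))

theorem sum4 (a b c e : ℕ) (r s₁ s₂ s₃ s₄ : ℤ) (d : Fin (a + b + c + e) → ℤ) :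
    r + ∑ t : Fin 4, ![s₁ + ∑ j : Fin a, d (Fin.castAdd e (Fin.castAdd c (Fin.castAdd b j))),
                       s₂ + ∑ j : Fin b, d (Fin.castAdd e (Fin.castAdd c (Fin.natAdd a j))),
                       s₃ + ∑ j : Fin c, d (Fin.castAdd e (Fin.natAdd (a + b) j)),
                       s₄ + ∑ j : Fin e, d (Fin.natAdd (a + b + c) j)] t
      = (r + (s₁ + s₂ + s₃ + s₄)) + ∑ j, d j := by
  simp [Fin.sum_univ_four, Fin.sum_univ_add]
  ring

/-- Full composition `μ ∘ (g₁, g₂, g₃, g₄)` with Koszul signs. -/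
def comp₄ [∀ i, AddCommGroup (N i)] {a b c e : ℕ} {r s₁ s₂ s₃ s₄ : ℤ}
    (μ : MMap M N 4 r) (g₁ : MMap L M a s₁) (g₂ : MMap L M b s₂) (g₃ : MMap L M c s₃)
    (g₄ : MMap L M e s₄) :
    MMap L N (a + b + c + e) (r + (s₁ + s₂ + s₃ + s₄)) :=
  fun d x =>
    ((-1 : ℤ) ^ (s₂ * (∑ j : Fin a, d (Fin.castAdd e (Fin.castAdd c (Fin.castAdd b j))))
        + s₃ * ((∑ j : Fin a, d (Fin.castAdd e (Fin.castAdd c (Fin.castAdd b j))))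
          + ∑ j : Fin b, d (Fin.castAdd e (Fin.castAdd c (Fin.natAdd a j))))
        + s₄ * ((∑ j : Fin a, d (Fin.castAdd e (Fin.castAdd c (Fin.castAdd b j))))
          + (∑ j : Fin b, d (Fin.castAdd e (Fin.castAdd c (Fin.natAdd a j))))
          + ∑ j : Fin c, d (Fin.castAdd e (Fin.natAdd (a + b) j)))).natAbs) •
    gcast (sum4 a b c e r s₁ s₂ s₃ s₄ d)
      (μ ![s₁ + ∑ j : Fin a, d (Fin.castAdd e (Fin.castAdd c (Fin.castAdd b j))),
           s₂ + ∑ j : Fin b, d (Fin.castAdd e (Fin.castAdd c (Fin.natAdd a j))),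
           s₃ + ∑ j : Fin c, d (Fin.castAdd e (Fin.natAdd (a + b) j)),
           s₄ + ∑ j : Fin e, d (Fin.natAdd (a + b + c) j)]
        (Fin.cons (gcast (by simp)
            (g₁ (fun j => d (Fin.castAdd e (Fin.castAdd c (Fin.castAdd b j))))
                (fun j => x (Fin.castAdd e (Fin.castAdd c (Fin.castAdd b j))))))
          (Fin.cons (gcast (by simp)
              (g₂ (fun j => d (Fin.castAdd e (Fin.castAdd c (Fin.natAdd a j))))
                  (fun j => x (Fin.castAdd e (Fin.castAdd c (Fin.natAdd a j))))))
            (Fin.cons (gcast (by simp)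
                (g₃ (fun j => d (Fin.castAdd e (Fin.natAdd (a + b) j)))
                    (fun j => x (Fin.castAdd e (Fin.natAdd (a + b) j)))))
              (fun _ : Fin 1 => gcast (by simp)
                (g₄ (fun j => d (Fin.natAdd (a + b + c) j))
                    (fun j => x (Fin.natAdd (a + b + c) j))))))))

/-- The differential `∂(μ) = D' ∘ μ - (-1)^{|μ|} ∑ᵢ μ ∘ᵢ D`. -/
def bdry [∀ i, AddCommGroup (L i)] [∀ i, AddCommGroup (M i)] {m : ℕ} {r : ℤ}
    (D' : MMap M M 1 (-1)) (D : MMap L L 1 (-1)) (μ : MMap L M m r) : MMap L M m (-1 + r) :=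
  comp₁ D' μ - ((-1 : ℤ) ^ r.natAbs) •
    ∑ p : Fin m, mcast (by have := p.isLt; omega) (by ring)
      (pcomp p.val (m - 1 - p.val) (mcast (by have := p.isLt; omega) rfl μ) D)

/-- The identity, as an `MMap`. -/
def idm : MMap L L 1 0 := fun d x => gcast (by rw [Fin.sum_univ_one, zero_add]) (x 0)

/-- `μ ∘_{m₁+1} ν`, recast to a specified target degree `R`. -/
def pc [∀ i, AddCommGroup (L i)] [∀ i, AddCommGroup (M i)] (R : ℤ) (m₁ m₂ : ℕ) {n : ℕ}
    {r s : ℤ} (μ : MMap L M (m₁ + 1 + m₂) r) (ν : MMap L L n s)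
    (h : r + s = R := by norm_num) : MMap L M (m₁ + n + m₂) R :=
  mcast rfl h (pcomp m₁ m₂ μ ν)

/-- `μ ∘ g`, recast to a specified target degree `R`. -/
def fc1 (R : ℤ) {a : ℕ} {r s : ℤ} (μ : MMap M N 1 r) (g : MMap L M a s)
    (h : r + s = R := by norm_num) : MMap L N a R :=
  mcast rfl h (comp₁ μ g)

/-- `μ ∘ (g₁, g₂)`, recast to a specified target degree `R`. -/
def fc2 [∀ i, AddCommGroup (N i)] (R : ℤ) {a b : ℕ} {r s₁ s₂ : ℤ}
    (μ : MMap M N 2 r) (g₁ : MMap L M a s₁) (g₂ : MMap L M b s₂)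
    (h : r + (s₁ + s₂) = R := by norm_num) : MMap L N (a + b) R :=
  mcast rfl h (comp₂ μ g₁ g₂)

/-- `μ ∘ (g₁, g₂, g₃)`, recast to a specified target degree `R`. -/
def fc3 [∀ i, AddCommGroup (N i)] (R : ℤ) {a b c : ℕ} {r s₁ s₂ s₃ : ℤ}
    (μ : MMap M N 3 r) (g₁ : MMap L M a s₁) (g₂ : MMap L M b s₂) (g₃ : MMap L M c s₃)
    (h : r + (s₁ + s₂ + s₃) = R := by norm_num) : MMap L N (a + b + c) R :=
  mcast rfl h (comp₃ μ g₁ g₂ g₃)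

/-- `μ ∘ (g₁, g₂, g₃, g₄)`, recast to a specified target degree `R`. -/
def fc4 [∀ i, AddCommGroup (N i)] (R : ℤ) {a b c e : ℕ} {r s₁ s₂ s₃ s₄ : ℤ}
    (μ : MMap M N 4 r) (g₁ : MMap L M a s₁) (g₂ : MMap L M b s₂) (g₃ : MMap L M c s₃)
    (g₄ : MMap L M e s₄) (h : r + (s₁ + s₂ + s₃ + s₄) = R := by norm_num) :
    MMap L N (a + b + c + e) R :=
  mcast rfl h (comp₄ μ g₁ g₂ g₃ g₄)

/-- `∂(μ)`, recast to a specified target degree `R`. -/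
def bd [∀ i, AddCommGroup (L i)] [∀ i, AddCommGroup (M i)] (R : ℤ) {m : ℕ} {r : ℤ}
    (D' : MMap M M 1 (-1)) (D : MMap L L 1 (-1)) (μ : MMap L M m r)
    (h : -1 + r = R := by norm_num) : MMap L M m R :=
  mcast rfl h (bdry D' D μ)

/-- Multilinearity over `k` of the components of an `MMap`. -/
def IsMultilinear (k : Type) [CommRing k] {L M : ℤ → Type} [∀ i, AddCommGroup (L i)]
    [∀ i, AddCommGroup (M i)] [∀ i, Module k (L i)] [∀ i, Module k (M i)] {m : ℕ} {r : ℤ}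
    (μ : MMap L M m r) : Prop :=
  ∀ (d : Fin m → ℤ) (x : ∀ j, L (d j)) (j : Fin m),
    (∀ a b : L (d j), μ d (Function.update x j (a + b))
        = μ d (Function.update x j a) + μ d (Function.update x j b)) ∧
    (∀ (c : k) (a : L (d j)), μ d (Function.update x j (c • a)) = c • μ d (Function.update x j a))

/-! ## Permutations (0-indexed; a cycle `(a b c)` is `swap a b * swap b c`) -/

def P12 (m : ℕ) [NeZero m] : Equiv.Perm (Fin m) := Equiv.swap 0 1
def P13 (m : ℕ) [NeZero m] : Equiv.Perm (Fin m) := Equiv.swap 0 2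
def P23 (m : ℕ) [NeZero m] : Equiv.Perm (Fin m) := Equiv.swap 1 2
def P34 (m : ℕ) [NeZero m] : Equiv.Perm (Fin m) := Equiv.swap 2 3
def P123 (m : ℕ) [NeZero m] : Equiv.Perm (Fin m) := Equiv.swap 0 1 * Equiv.swap 1 2
def P132 (m : ℕ) [NeZero m] : Equiv.Perm (Fin m) := Equiv.swap 0 2 * Equiv.swap 2 1
def P234 (m : ℕ) [NeZero m] : Equiv.Perm (Fin m) := Equiv.swap 1 2 * Equiv.swap 2 3
def P243 (m : ℕ) [NeZero m] : Equiv.Perm (Fin m) := Equiv.swap 1 3 * Equiv.swap 3 2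
def P1234 (m : ℕ) [NeZero m] : Equiv.Perm (Fin m) :=
  Equiv.swap 0 1 * Equiv.swap 1 2 * Equiv.swap 2 3
def P1432 (m : ℕ) [NeZero m] : Equiv.Perm (Fin m) :=
  Equiv.swap 0 3 * Equiv.swap 3 2 * Equiv.swap 2 1
def P1342 (m : ℕ) [NeZero m] : Equiv.Perm (Fin m) :=
  Equiv.swap 0 2 * Equiv.swap 2 3 * Equiv.swap 3 1
def P13P24 (m : ℕ) [NeZero m] : Equiv.Perm (Fin m) := Equiv.swap 0 2 * Equiv.swap 1 3

end WL3
namespace WL3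

open Finset

variable (k : Type) [CommRing k]

/-- A Leibniz 3-algebra structure: maps `l2, l3, l4` on a complex with differential `D`
satisfying the generalized Jacobi identities (L1)–(L4). -/
structure IsLeibniz3 {L : ℤ → Type} [∀ i, AddCommGroup (L i)] [∀ i, Module k (L i)]
    (D : MMap L L 1 (-1)) (l2 : MMap L L 2 0) (l3 : MMap L L 3 1) (l4 : MMap L L 4 2) :
    Prop where
  lin2 : IsMultilinear k l2
  lin3 : IsMultilinear k l3
  lin4 : IsMultilinear k l4
  eqL1 : bd (-1) D D l2 = 0
  eqL2 : bd 0 D D l3 =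
    pc 0 1 0 l2 l2 - pc 0 0 1 l2 l2 - pa (P12 3) (pc 0 1 0 l2 l2)
  eqL3 : bd 1 D D l4 =
    pc 1 0 1 l2 l3 + pc 1 1 0 l2 l3 - pa (P12 4) (pc 1 1 0 l2 l3)
      + pa (P123 4) (pc 1 1 0 l2 l3) - pc 1 0 2 l3 l2
      + pc 1 1 1 l3 l2 - pa (P12 4) (pc 1 1 1 l3 l2)
      - pc 1 2 0 l3 l2 + pa (P23 4) (pc 1 2 0 l3 l2) - pa (P132 4) (pc 1 2 0 l3 l2)
  eqL4 : (0 : MMap L L 5 2) =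
    pc 2 0 1 l2 l4 - pc 2 1 0 l2 l4 + pa (P12 5) (pc 2 1 0 l2 l4)
      - pa (P123 5) (pc 2 1 0 l2 l4) + pa (P1234 5) (pc 2 1 0 l2 l4)
      + pc 2 0 2 l3 l3 + pc 2 1 1 l3 l3 - pa (P12 5) (pc 2 1 1 l3 l3)
      + pa (P123 5) (pc 2 1 1 l3 l3) + pc 2 2 0 l3 l3
      - pa (P23 5) (pc 2 2 0 l3 l3) + pa (P132 5) (pc 2 2 0 l3 l3)
      + pa (P234 5) (pc 2 2 0 l3 l3) - pa (P1342 5) (pc 2 2 0 l3 l3)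
      + pa (P13P24 5) (pc 2 2 0 l3 l3)
      + pc 2 0 3 l4 l2 - pc 2 1 2 l4 l2 + pa (P12 5) (pc 2 1 2 l4 l2)
      + pc 2 2 1 l4 l2 - pa (P23 5) (pc 2 2 1 l4 l2) + pa (P132 5) (pc 2 2 1 l4 l2)
      - pc 2 3 0 l4 l2 + pa (P34 5) (pc 2 3 0 l4 l2) - pa (P243 5) (pc 2 3 0 l4 l2)
      + pa (P1432 5) (pc 2 3 0 l4 l2)

/-- A weak Lie 3-algebra: a 3-term chain complex equipped with structure maps
`l2, l3, l4, l21, l211, l31, l32` satisfying (L1)–(L4) and (W1)–(W11). -/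
structure WeakLie3 (L : ℤ → Type) [∀ i, AddCommGroup (L i)] [∀ i, Module k (L i)] where
  D : MMap L L 1 (-1)
  linD : IsMultilinear k D
  dd : fc1 (-2) D D = 0
  bound : ∀ i : ℤ, (i < 0 ∨ 2 < i) → ∀ x : L i, x = 0
  l2 : MMap L L 2 0
  l3 : MMap L L 3 1
  l4 : MMap L L 4 2
  l21 : MMap L L 2 1
  l211 : MMap L L 2 2
  l31 : MMap L L 3 2
  l32 : MMap L L 3 2
  leib : IsLeibniz3 k D l2 l3 l4
  lin21 : IsMultilinear k l21
  lin211 : IsMultilinear k l211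
  lin31 : IsMultilinear k l31
  lin32 : IsMultilinear k l32
  w1 : bd 0 D D l21 = l2 + pa (P12 2) l2
  w2 : bd 1 D D l211 = l21 - pa (P12 2) l21
  w3 : bd 1 D D l31 = l3 + pa (P12 3) l3 + pc 1 0 1 l2 l21
  w4 : bd 1 D D l32 = l3 + pa (P23 3) l3 - pc 1 1 0 l2 l21 + pc 1 0 1 l21 l2
        + pa (P12 3) (pc 1 1 0 l21 l2)
  w5 : l211 + pa (P12 2) l211 = 0
  w6 : l31 - pa (P12 3) l31 = pc 2 0 1 l2 l211
  w7 : l31 - pa (P12 3) l32 + pa (P132 3) l31 - l32 + pa (P23 3) l31 - pa (P123 3) l32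
        = pc 2 1 0 l21 l21 + pc 2 0 1 l21 l21 + pa (P12 3) (pc 2 1 0 l21 l21)
          + pa (P132 3) (pc 2 1 0 l211 l2)
  w8 : l32 - pa (P23 3) l32 = - pc 2 1 0 l2 l211 + pc 2 0 1 l211 l2
        + pa (P12 3) (pc 2 1 0 l211 l2)
  w9 : l4 + pa (P12 4) l4 = pc 2 0 1 l2 l31 - pc 2 2 0 l31 l2
        + pa (P123 4) (pc 2 1 0 l2 l31) + pc 2 0 2 l3 l21
  w10 : l4 + pa (P23 4) l4 = pc 2 0 1 l2 l32 - pc 2 1 1 l3 l21 + pc 2 1 0 l2 l31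
        - pc 2 0 2 l31 l2 - pa (P12 4) (pc 2 1 1 l31 l2) - pa (P132 4) (pc 2 2 0 l31 l2)
  w11 : l4 + pa (P34 4) l4 = pc 2 0 1 l21 l3 - pc 2 0 2 l32 l2 + pc 2 1 1 l32 l2
        - pa (P12 4) (pc 2 1 1 l32 l2) + pc 2 2 0 l3 l21 + pa (P23 4) (pc 2 2 0 l32 l2)
        - pa (P132 4) (pc 2 2 0 l32 l2) + pc 2 1 0 l2 l32 - pa (P12 4) (pc 2 1 0 l2 l32)
        + pa (P123 4) (pc 2 1 0 l21 l3)

end WL3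
namespace WL3

open Finset

variable (k : Type) [CommRing k]

/-- A weak morphism of weak Lie 3-algebras `(f1,f2,f21,f3) : A → B`, i.e. a solution of
equations (M1)–(M8). -/
structure IsWeakMorphism {L M : ℤ → Type} [∀ i, AddCommGroup (L i)] [∀ i, Module k (L i)]
    [∀ i, AddCommGroup (M i)] [∀ i, Module k (M i)]
    (A : WeakLie3 k L) (B : WeakLie3 k M)
    (f1 : MMap L M 1 0) (f2 : MMap L M 2 1) (f21 : MMap L M 2 2) (f3 : MMap L M 3 2) :
    Prop where
  lin1 : IsMultilinear k f1
  lin2 : IsMultilinear k f2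
  lin21 : IsMultilinear k f21
  lin3 : IsMultilinear k f3
  m1 : bd (-1) B.D A.D f1 = 0
  m2 : bd 0 B.D A.D f2 = fc1 0 f1 A.l2 - fc2 0 B.l2 f1 f1
  m3 : bd 1 B.D A.D f3 = fc1 1 f1 A.l3 - pc 1 1 0 f2 A.l2 + pc 1 0 1 f2 A.l2
        + pa (P12 3) (pc 1 1 0 f2 A.l2) - fc3 1 B.l3 f1 f1 f1 - fc2 1 B.l2 f1 f2
        + fc2 1 B.l2 f2 f1 + pa (P12 3) (fc2 1 B.l2 f1 f2)
  m4 : fc1 2 f1 A.l4 - fc4 2 B.l4 f1 f1 f1 f1 =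
        pc 2 0 1 f2 A.l3 + pc 2 1 0 f2 A.l3 - pa (P12 4) (pc 2 1 0 f2 A.l3)
        + pa (P123 4) (pc 2 1 0 f2 A.l3) - pc 2 0 2 f3 A.l2 + pc 2 1 1 f3 A.l2
        - pa (P12 4) (pc 2 1 1 f3 A.l2) - pc 2 2 0 f3 A.l2 + pa (P23 4) (pc 2 2 0 f3 A.l2)
        - pa (P132 4) (pc 2 2 0 f3 A.l2) + fc2 2 B.l2 f3 f1 + fc2 2 B.l2 f1 f3
        - pa (P12 4) (fc2 2 B.l2 f1 f3) + pa (P123 4) (fc2 2 B.l2 f1 f3)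
        - fc2 2 B.l2 f2 f2 + pa (P23 4) (fc2 2 B.l2 f2 f2) - pa (P132 4) (fc2 2 B.l2 f2 f2)
        + fc3 2 B.l3 f2 f1 f1 - fc3 2 B.l3 f1 f2 f1 + pa (P12 4) (fc3 2 B.l3 f1 f2 f1)
        + fc3 2 B.l3 f1 f1 f2 - pa (P23 4) (fc3 2 B.l3 f1 f1 f2)
        + pa (P132 4) (fc3 2 B.l3 f1 f1 f2)
  m5 : bd 1 B.D A.D f21 = - f2 - pa (P12 2) f2 + fc1 1 f1 A.l21 - fc2 1 B.l21 f1 f1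
  m6 : fc1 2 f1 A.l211 - fc2 2 B.l211 f1 f1 = f21 - pa (P12 2) f21
  m7 : fc1 2 f1 A.l31 - fc3 2 B.l31 f1 f1 f1 =
        f3 + pa (P12 3) f3 + pc 2 0 1 f2 A.l21 + fc2 2 B.l2 f21 f1
  m8 : fc1 2 f1 A.l32 - fc3 2 B.l32 f1 f1 f1 =
        f3 + pa (P23 3) f3 - pc 2 1 0 f2 A.l21 + pc 2 0 1 f21 A.l2
        + pa (P12 3) (pc 2 1 0 f21 A.l2) - fc2 2 B.l2 f1 f21 - fc2 2 B.l21 f2 f1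
        - pa (P12 3) (fc2 2 B.l21 f1 f2)

/-- A morphism of (semi-strict) Lie 3-algebras / Leibniz 3-algebras: equations (M1)–(M4)
for structure maps `(a2,a3,a4)` on the source and `(b2,b3,b4)` on the target. -/
structure IsLeibMorphism {L M : ℤ → Type} [∀ i, AddCommGroup (L i)] [∀ i, Module k (L i)]
    [∀ i, AddCommGroup (M i)] [∀ i, Module k (M i)]
    (DL : MMap L L 1 (-1)) (DM : MMap M M 1 (-1))
    (a2 : MMap L L 2 0) (a3 : MMap L L 3 1) (a4 : MMap L L 4 2)
    (b2 : MMap M M 2 0) (b3 : MMap M M 3 1) (b4 : MMap M M 4 2)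
    (f1 : MMap L M 1 0) (f2 : MMap L M 2 1) (f3 : MMap L M 3 2) : Prop where
  lin1 : IsMultilinear k f1
  lin2 : IsMultilinear k f2
  lin3 : IsMultilinear k f3
  m1 : bd (-1) DM DL f1 = 0
  m2 : bd 0 DM DL f2 = fc1 0 f1 a2 - fc2 0 b2 f1 f1
  m3 : bd 1 DM DL f3 = fc1 1 f1 a3 - pc 1 1 0 f2 a2 + pc 1 0 1 f2 a2
        + pa (P12 3) (pc 1 1 0 f2 a2) - fc3 1 b3 f1 f1 f1 - fc2 1 b2 f1 f2
        + fc2 1 b2 f2 f1 + pa (P12 3) (fc2 1 b2 f1 f2)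
  m4 : fc1 2 f1 a4 - fc4 2 b4 f1 f1 f1 f1 =
        pc 2 0 1 f2 a3 + pc 2 1 0 f2 a3 - pa (P12 4) (pc 2 1 0 f2 a3)
        + pa (P123 4) (pc 2 1 0 f2 a3) - pc 2 0 2 f3 a2 + pc 2 1 1 f3 a2
        - pa (P12 4) (pc 2 1 1 f3 a2) - pc 2 2 0 f3 a2 + pa (P23 4) (pc 2 2 0 f3 a2)
        - pa (P132 4) (pc 2 2 0 f3 a2) + fc2 2 b2 f3 f1 + fc2 2 b2 f1 f3
        - pa (P12 4) (fc2 2 b2 f1 f3) + pa (P123 4) (fc2 2 b2 f1 f3)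
        - fc2 2 b2 f2 f2 + pa (P23 4) (fc2 2 b2 f2 f2) - pa (P132 4) (fc2 2 b2 f2 f2)
        + fc3 2 b3 f2 f1 f1 - fc3 2 b3 f1 f2 f1 + pa (P12 4) (fc3 2 b3 f1 f2 f1)
        + fc3 2 b3 f1 f1 f2 - pa (P23 4) (fc3 2 b3 f1 f1 f2)
        + pa (P132 4) (fc3 2 b3 f1 f1 f2)

/-- A deformation retract `(p, i, h)` of `(L, D)` onto `(L', D')`:
`p`, `i` are chain maps, `id - i∘p = D∘h + h∘D` and `p∘i = id`. -/
structure IsDefRetract {L L' : ℤ → Type} [∀ i, AddCommGroup (L i)] [∀ i, Module k (L i)]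
    [∀ i, AddCommGroup (L' i)] [∀ i, Module k (L' i)]
    (D : MMap L L 1 (-1)) (D' : MMap L' L' 1 (-1))
    (p : MMap L L' 1 0) (i : MMap L' L 1 0) (h : MMap L L 1 1) : Prop where
  linp : IsMultilinear k p
  lini : IsMultilinear k i
  linh : IsMultilinear k h
  chainp : bd (-1) D' D p = 0
  chaini : bd (-1) D D' i = 0
  homotopy : idm - fc1 0 i p = fc1 0 D h + fc1 0 h D
  retract : fc1 0 p i = idm

/-- A weak Lie 2-algebra in the sense of Roytenberg (a 2-term truncation of a weak
Lie 3-algebra). -/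
structure WeakLie2 (L : ℤ → Type) [∀ i, AddCommGroup (L i)] [∀ i, Module k (L i)] where
  D : MMap L L 1 (-1)
  linD : IsMultilinear k D
  dd : fc1 (-2) D D = 0
  bound : ∀ i : ℤ, (i < 0 ∨ 1 < i) → ∀ x : L i, x = 0
  l2 : MMap L L 2 0
  l3 : MMap L L 3 1
  l21 : MMap L L 2 1
  lin2 : IsMultilinear k l2
  lin3 : IsMultilinear k l3
  lin21 : IsMultilinear k l21
  e1 : bd (-1) D D l2 = 0
  e2 : bd 0 D D l3 = pc 0 1 0 l2 l2 - pc 0 0 1 l2 l2 - pa (P12 3) (pc 0 1 0 l2 l2)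
  e3 : (0 : MMap L L 4 1) =
    pc 1 0 1 l2 l3 + pc 1 1 0 l2 l3 - pa (P12 4) (pc 1 1 0 l2 l3)
      + pa (P123 4) (pc 1 1 0 l2 l3) - pc 1 0 2 l3 l2
      + pc 1 1 1 l3 l2 - pa (P12 4) (pc 1 1 1 l3 l2)
      - pc 1 2 0 l3 l2 + pa (P23 4) (pc 1 2 0 l3 l2) - pa (P132 4) (pc 1 2 0 l3 l2)
  e4 : bd 0 D D l21 = l2 + pa (P12 2) l2
  e5 : (0 : MMap L L 2 1) = l21 - pa (P12 2) l21
  e6 : (0 : MMap L L 3 1) = l3 + pa (P12 3) l3 + pc 1 0 1 l2 l21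
  e7 : (0 : MMap L L 3 1) = l3 + pa (P23 3) l3 - pc 1 1 0 l2 l21 + pc 1 0 1 l21 l2
        + pa (P12 3) (pc 1 1 0 l21 l2)

end WL3
namespace WL3

open Finset

section Transfer

variable {k : Type} [CommRing k] {L L' : ℤ → Type}
  [∀ i, AddCommGroup (L i)] [∀ i, Module k (L i)]
  [∀ i, AddCommGroup (L' i)] [∀ i, Module k (L' i)]
variable (A : WeakLie3 k L) (p : MMap L L' 1 0) (i : MMap L' L 1 0) (h : MMap L L 1 1)

/-- `h ∘ λ2` -/
def hl2 : MMap L L 2 1 := fc1 1 h A.l2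
/-- `h ∘ λ3` -/
def hl3 : MMap L L 3 2 := fc1 2 h A.l3
/-- `h ∘ λ21` -/
def hl21 : MMap L L 2 2 := fc1 2 h A.l21

/-- Transferred `λ2' = p ∘ λ2 ∘ (i,i)`. -/
def tl2 : MMap L' L' 2 0 := fc1 0 p (fc2 0 A.l2 i i)

/-- Transferred `λ3'`. -/
def tl3 : MMap L' L' 3 1 :=
  fc1 1 p (fc3 1 A.l3 i i i)
  + fc1 1 p (fc3 1 (pc 1 0 1 A.l2 (hl2 A h)
      - (pc 1 1 0 A.l2 (hl2 A h) - pa (P12 3) (pc 1 1 0 A.l2 (hl2 A h)))) i i i)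

/-- Transferred `λ4'`. -/
def tl4 : MMap L' L' 4 2 :=
  fc1 2 p (fc4 2 A.l4 i i i i)
  - fc1 2 p (fc4 2
      (pc 2 0 1 A.l2 (hl3 A h)
        + (pc 2 1 0 A.l2 (hl3 A h) - pa (P12 4) (pc 2 1 0 A.l2 (hl3 A h))
            + pa (P123 4) (pc 2 1 0 A.l2 (hl3 A h)))
        + pc 2 0 2 A.l3 (hl2 A h)
        - (pc 2 1 1 A.l3 (hl2 A h) - pa (P12 4) (pc 2 1 1 A.l3 (hl2 A h)))
        + (pc 2 2 0 A.l3 (hl2 A h) - pa (P23 4) (pc 2 2 0 A.l3 (hl2 A h))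
            + pa (P132 4) (pc 2 2 0 A.l3 (hl2 A h)))) i i i i)
  - fc1 2 p (fc4 2
      (pc 2 0 2 (pc 1 0 1 A.l2 (hl2 A h)) (hl2 A h)
        - (pc 2 1 1 (pc 1 0 1 A.l2 (hl2 A h)) (hl2 A h)
            - pa (P12 4) (pc 2 1 1 (pc 1 0 1 A.l2 (hl2 A h)) (hl2 A h)))
        + (fc2 2 A.l2 (hl2 A h) (hl2 A h) - pa (P23 4) (fc2 2 A.l2 (hl2 A h) (hl2 A h))
            + pa (P132 4) (fc2 2 A.l2 (hl2 A h) (hl2 A h)))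
        + (pc 2 1 1 (pc 1 1 0 A.l2 (hl2 A h)) (hl2 A h)
            - pa (P12 4) (pc 2 1 1 (pc 1 1 0 A.l2 (hl2 A h)) (hl2 A h))
            + pa (P123 4) (pc 2 1 1 (pc 1 1 0 A.l2 (hl2 A h)) (hl2 A h)))
        - (pc 2 2 0 (pc 1 1 0 A.l2 (hl2 A h)) (hl2 A h)
            - pa (P12 4) (pc 2 2 0 (pc 1 1 0 A.l2 (hl2 A h)) (hl2 A h))
            + pa (P123 4) (pc 2 2 0 (pc 1 1 0 A.l2 (hl2 A h)) (hl2 A h))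
            - pa (P23 4) (pc 2 2 0 (pc 1 1 0 A.l2 (hl2 A h)) (hl2 A h))
            + pa (P132 4) (pc 2 2 0 (pc 1 1 0 A.l2 (hl2 A h)) (hl2 A h))
            - pa (P13 4) (pc 2 2 0 (pc 1 1 0 A.l2 (hl2 A h)) (hl2 A h)))) i i i i)

/-- Transferred `λ21' = p ∘ λ21 ∘ (i,i)`. -/
def tl21 : MMap L' L' 2 1 := fc1 1 p (fc2 1 A.l21 i i)

/-- Transferred `λ211' = p ∘ λ211 ∘ (i,i)`. -/
def tl211 : MMap L' L' 2 2 := fc1 2 p (fc2 2 A.l211 i i)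

/-- Transferred `λ31'`. -/
def tl31 : MMap L' L' 3 2 :=
  fc1 2 p (fc3 2 A.l31 i i i) - fc1 2 p (fc3 2 (pc 2 0 1 A.l2 (hl21 A h)) i i i)

/-- Transferred `λ32'`. -/
def tl32 : MMap L' L' 3 2 :=
  fc1 2 p (fc3 2 A.l32 i i i)
  + fc1 2 p (fc3 2 (pc 2 0 1 A.l21 (hl2 A h) + pc 2 1 0 A.l2 (hl21 A h)
      + pa (P12 3) (pc 2 1 0 A.l21 (hl2 A h))) i i i)

/-- Extension of `i`: `i₂ = -h ∘ λ2 ∘ (i,i)`. -/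
def ti2 : MMap L' L 2 1 := - fc1 1 h (fc2 0 A.l2 i i)

/-- Extension of `i`: `i₂₁ = -h ∘ λ21 ∘ (i,i)`. -/
def ti21 : MMap L' L 2 2 := - fc1 2 h (fc2 1 A.l21 i i)

/-- Extension of `i`: `i₃`. -/
def ti3 : MMap L' L 3 2 :=
  - fc1 2 h (fc3 1 A.l3 i i i)
  - fc1 2 h (fc3 1 (pc 1 0 1 A.l2 (hl2 A h)
      - (pc 1 1 0 A.l2 (hl2 A h) - pa (P12 3) (pc 1 1 0 A.l2 (hl2 A h)))) i i i)

end Transfer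

section Skew

variable (k : Type) [CommRing k] [Invertible (2 : k)] [Invertible (3 : k)]
variable {L M : ℤ → Type} [∀ i, AddCommGroup (L i)] [∀ i, Module k (L i)]
  [∀ i, AddCommGroup (M i)] [∀ i, Module k (M i)]

/-- Skew-symmetrization `λ̄2` of a weak Lie 3-algebra. -/
def skew2 (A : WeakLie3 k L) : MMap L L 2 0 :=
  (⅟ (2 : k)) • ∑ σ : Equiv.Perm (Fin 2), (Equiv.Perm.sign σ : ℤ) • pa σ A.l2

/-- Skew-symmetrization `λ̄3` of a weak Lie 3-algebra. -/
def skew3 (A : WeakLie3 k L) : MMap L L 3 1 :=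
  (⅟ (2 : k) * ⅟ (3 : k)) • ∑ σ : Equiv.Perm (Fin 3), (Equiv.Perm.sign σ : ℤ) • pa σ A.l3
  - (⅟ (2 : k) * ⅟ (2 : k) * ⅟ (2 : k) * ⅟ (3 : k)) •
      ∑ σ : Equiv.Perm (Fin 3), (Equiv.Perm.sign σ : ℤ) •
        pa σ (pc 1 0 1 A.l21 A.l2 + pc 1 1 0 A.l21 A.l2)

/-- Skew-symmetrization `λ̄4` of a weak Lie 3-algebra. -/
def skew4 (A : WeakLie3 k L) : MMap L L 4 2 :=
  (⅟ (2 : k) * ⅟ (2 : k) * ⅟ (2 : k) * ⅟ (3 : k)) •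
      ∑ σ : Equiv.Perm (Fin 4), (Equiv.Perm.sign σ : ℤ) • pa σ A.l4
  + (⅟ (2 : k) * ⅟ (2 : k) * ⅟ (2 : k) * ⅟ (2 : k) * ⅟ (3 : k)) •
      ∑ σ : Equiv.Perm (Fin 4), (Equiv.Perm.sign σ : ℤ) •
        pa σ (pc 2 0 1 A.l21 A.l3 - pc 2 0 2 A.l31 A.l2 + pc 2 1 1 A.l32 A.l2
          - pc 2 1 0 A.l21 A.l3 - pc 2 1 1 A.l31 A.l2 + pc 2 2 0 A.l32 A.l2)

/-- Skew-symmetrization `f̄2` of the second component of a weak morphism. -/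
def skewMor2 (f2 : MMap L M 2 1) : MMap L M 2 1 :=
  (⅟ (2 : k)) • ∑ σ : Equiv.Perm (Fin 2), (Equiv.Perm.sign σ : ℤ) • pa σ f2

/-- Skew-symmetrization `f̄3` of the third component of a weak morphism `A → B`. -/
def skewMor3 (A : WeakLie3 k L) (B : WeakLie3 k M) (f1 : MMap L M 1 0) (f2 : MMap L M 2 1)
    (f21 : MMap L M 2 2) (f3 : MMap L M 3 2) : MMap L M 3 2 :=
  (⅟ (2 : k) * ⅟ (3 : k)) • ∑ σ : Equiv.Perm (Fin 3), (Equiv.Perm.sign σ : ℤ) • pa σ f3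
  - (⅟ (2 : k) * ⅟ (2 : k) * ⅟ (2 : k) * ⅟ (3 : k)) •
      ∑ σ : Equiv.Perm (Fin 3), (Equiv.Perm.sign σ : ℤ) •
        pa σ (pc 2 0 1 f21 A.l2 + pc 2 1 0 f21 A.l2
          - fc2 2 B.l21 f2 f1 - fc2 2 B.l21 f1 f2)

end Skew

section Comp

variable {k : Type} [CommRing k] {L M N : ℤ → Type}
  [∀ i, AddCommGroup (L i)] [∀ i, Module k (L i)]
  [∀ i, AddCommGroup (M i)] [∀ i, Module k (M i)]
  [∀ i, AddCommGroup (N i)] [∀ i, Module k (N i)]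

/-- First component of the composition of weak morphisms. -/
def cmp1 (f1' : MMap M N 1 0) (f1 : MMap L M 1 0) : MMap L N 1 0 := fc1 0 f1' f1

/-- Second component of the composition of weak morphisms. -/
def cmp2 (f1' : MMap M N 1 0) (f2' : MMap M N 2 1) (f1 : MMap L M 1 0) (f2 : MMap L M 2 1) :
    MMap L N 2 1 := fc2 1 f2' f1 f1 + fc1 1 f1' f2

/-- `(f'∘f)21` component of the composition of weak morphisms. -/
def cmp21 (f1' : MMap M N 1 0) (f21' : MMap M N 2 2) (f1 : MMap L M 1 0)
    (f21 : MMap L M 2 2) : MMap L N 2 2 := fc2 2 f21' f1 f1 + fc1 2 f1' f21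

/-- Third component of the composition of weak morphisms. -/
def cmp3 (f1' : MMap M N 1 0) (f2' : MMap M N 2 1) (f3' : MMap M N 3 2)
    (f1 : MMap L M 1 0) (f2 : MMap L M 2 1) (f3 : MMap L M 3 2) : MMap L N 3 2 :=
  fc3 2 f3' f1 f1 f1 - fc2 2 f2' f2 f1 + fc2 2 f2' f1 f2 - pa (P12 3) (fc2 2 f2' f1 f2)
    + fc1 2 f1' f3

end Comp

end WL3

namespace WL3

open Finset

set_option linter.unusedSectionVars false

/-! ## Graded maps as multilinear maps on the total module -/

section Totalization

/-- The total module of a graded module. -/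
abbrev Tot (L : ℤ → Type) [∀ i, AddCommGroup (L i)] : Type := Π₀ i : ℤ, L i

variable (k : Type) [CommRing k] {L M N : ℤ → Type}
  [∀ i, AddCommGroup (L i)] [∀ i, Module k (L i)]
  [∀ i, AddCommGroup (M i)] [∀ i, Module k (M i)]
  [∀ i, AddCommGroup (N i)] [∀ i, Module k (N i)]

/-- The tuple of elements of the total module underlying a tuple of homogeneous elements. -/
def tup {m : ℕ} (d : Fin m → ℤ) (x : ∀ j, L (d j)) : Fin m → Tot L :=
  fun j => DFinsupp.single (d j) (x j)

/-- The value of a graded map at homogeneous elements, in the total module. -/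
def ev {m : ℕ} {r : ℤ} (μ : MMap L M m r) (d : Fin m → ℤ) (x : ∀ j, L (d j)) : Tot M :=
  DFinsupp.single (r + ∑ j, d j) (μ d x)

open Classical in
/-- The multilinear map on total modules induced by a multilinear graded map. -/
noncomputable def hat {m : ℕ} {r : ℤ} (μ : MMap L M m r) :
    MultilinearMap k (fun _ : Fin m => Tot L) (Tot M) :=
  if h : IsMultilinear k μ then
    MultilinearMap.fromDFinsuppEquiv (fun _ : Fin m => ℤ) k (M := fun _ i => L i) fun d =>
      (DFinsupp.lsingle (r + ∑ j, d j)).compMultilinearMap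
        { toFun := μ d
          map_update_add' := fun {i} x j a b => by
            rw [Subsingleton.elim i (instDecidableEqFin m)]; exact (h d x j).1 a b
          map_update_smul' := fun {i} x j c a => by
            rw [Subsingleton.elim i (instDecidableEqFin m)]; exact (h d x j).2 c a }
  else 0

variable {k}

theorem hat_tup {m : ℕ} {r : ℤ} {μ : MMap L M m r} (h : IsMultilinear k μ) (d : Fin m → ℤ)
    (x : ∀ j, L (d j)) : hat k μ (tup d x) = ev μ d x := by
  rw [hat, dif_pos h]
  exact MultilinearMap.fromDFinsuppEquiv_single _ _ _

theorem hat_block {m n : ℕ} {r : ℤ} {μ : MMap L M m r} (h : IsMultilinear k μ) (d : Fin n → ℤ)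
    (x : ∀ j, L (d j)) (u : Fin m → Fin n) : (hat k μ fun j => tup d x (u j)) =
      DFinsupp.single (r + ∑ j, d (u j)) (μ (fun j => d (u j)) fun j => x (u j)) :=
  hat_tup h _ _

theorem tup_cons {m : ℕ} (d : Fin (m + 1) → ℤ) (a : L (d 0)) (x : ∀ j : Fin m, L (d j.succ)) :
    tup d (Fin.cons a x) = Matrix.vecCons (DFinsupp.single (d 0) a) (tup (fun j => d j.succ) x) := by
  funext t
  cases t using Fin.cases <;> rfl

theorem tup_fin_one (d : Fin 1 → ℤ) (x : ∀ j : Fin 1, L (d j)) :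
    tup d x = ![DFinsupp.single (d 0) (x 0)] := by
  funext t
  fin_cases t
  rfl

theorem ev_injective {m : ℕ} {r : ℤ} {μ ν : MMap L M m r} :
    μ = ν ↔ ∀ d x, ev μ d x = ev ν d x := by
  refine ⟨fun h => by simp [h], fun h => ?_⟩
  funext d x
  exact DFinsupp.single_injective (h d x)

theorem single_gcast {i j : ℤ} (h : i = j) (x : L i) :
    (DFinsupp.single j (gcast h x) : Tot L) = DFinsupp.single i x := by
  subst h; rfl

theorem isMultilinear_of_ev {m : ℕ} {r : ℤ} {μ : MMap L M m r}
    (h : ∀ d, ∃ F : (Fin m → Tot L) → Tot M, (∀ x, ev μ d x = F (tup d x)) ∧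
      ∀ (X : Fin m → Tot L) j, (∀ a b, F (Function.update X j (a + b)) =
        F (Function.update X j a) + F (Function.update X j b)) ∧
        ∀ (c : k) a, F (Function.update X j (c • a)) = c • F (Function.update X j a)) :
    IsMultilinear k μ := by
  intro d x j
  obtain ⟨F, hF, hl⟩ := h d
  have key : ∀ a, tup d (Function.update x j a) = Function.update (tup d x) j
      (DFinsupp.single (d j) a) := by
    intro a
    funext i
    rcases eq_or_ne i j with rfl | hij
    · simp [tup]
    · simp [tup, hij]
  constructor
  · intro a b
    apply DFinsupp.single_injective (i := r + ∑ j, d j)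
    have := hF (Function.update x j (a + b))
    rw [key, DFinsupp.single_add, (hl _ _).1, ← key, ← key, ← hF, ← hF] at this
    simpa [ev] using this
  · intro c a
    apply DFinsupp.single_injective (i := r + ∑ j, d j)
    have := hF (Function.update x j (c • a))
    rw [key, DFinsupp.single_smul, (hl _ _).2, ← key, ← hF] at this
    simpa [ev] using this

@[simp] theorem ev_add {m : ℕ} {r : ℤ} (μ ν : MMap L M m r) (d x) :
    ev (μ + ν) d x = ev μ d x + ev ν d x := by simp [ev]

@[simp] theorem ev_sub {m : ℕ} {r : ℤ} (μ ν : MMap L M m r) (d x) :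
    ev (μ - ν) d x = ev μ d x - ev ν d x := by simp [ev]

@[simp] theorem ev_neg {m : ℕ} {r : ℤ} (μ : MMap L M m r) (d x) :
    ev (-μ) d x = -ev μ d x := by simp [ev]

@[simp] theorem ev_zero {m : ℕ} {r : ℤ} (d x) : ev (0 : MMap L M m r) d x = 0 := by simp [ev]

@[simp] theorem ev_zsmul {m : ℕ} {r : ℤ} (c : ℤ) (μ : MMap L M m r) (d x) :
    ev (c • μ) d x = c • ev μ d x := by
  simp [ev, DFinsupp.single_smul]

theorem ev_sum {m : ℕ} {r : ℤ} {ι : Type} (s : Finset ι) (μ : ι → MMap L M m r) (d x) :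
    ev (∑ i ∈ s, μ i) d x = ∑ i ∈ s, ev (μ i) d x := by
  simp only [ev, Finset.sum_apply]
  exact map_sum (DFinsupp.singleAddHom (fun i => M i) _) _ _

theorem ev_mcast {m m' : ℕ} {r r' : ℤ} (hm : m = m') (hr : r = r') (μ : MMap L M m r) (d x) :
    ev (mcast hm hr μ) d x = ev μ (fun j => d (Fin.cast hm j)) (fun j => x (Fin.cast hm j)) := by
  subst hm hr; rfl

theorem isMultilinear_mcast {m m' : ℕ} {r r' : ℤ} (hm : m = m') (hr : r = r')
    {μ : MMap L M m r} (h : IsMultilinear k μ) : IsMultilinear k (mcast hm hr μ) := by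
  subst hm hr; exact h

theorem hat_mcast {m m' : ℕ} {r r' : ℤ} (hm : m = m') (hr : r = r') (μ : MMap L M m r) (X) :
    hat k (mcast hm hr μ) X = hat k μ (fun j => X (Fin.cast hm j)) := by
  subst hm hr; rfl

theorem ev_pa {m : ℕ} {r : ℤ} (σ : Equiv.Perm (Fin m)) (μ : MMap L M m r) (d x) :
    ev (pa σ μ) d x = koszulSign d σ •
      ev μ (fun j => d (σ.symm j)) (fun j => x (σ.symm j)) := by
  simp only [ev, pa]
  rw [DFinsupp.single_smul, single_gcast]

theorem ev_pcomp {m₁ m₂ n : ℕ} {r s : ℤ} {μ : MMap L M (m₁ + 1 + m₂) r} (hμ : IsMultilinear k μ)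
    {ν : MMap L L n s} (hν : IsMultilinear k ν) (d x) :
    ev (pcomp m₁ m₂ μ ν) d x =
      ((-1 : ℤ) ^ (s * ∑ j : Fin m₁, d (Fin.castAdd m₂ (Fin.castAdd n j))).natAbs) •
      hat k μ (Fin.append (Fin.append (fun j => tup d x (Fin.castAdd m₂ (Fin.castAdd n j)))
        (fun _ => hat k ν fun j => tup d x (Fin.castAdd m₂ (Fin.natAdd m₁ j))))
        (fun j => tup d x (Fin.natAdd (m₁ + n) j))) := by
  simp only [ev, pcomp]
  rw [DFinsupp.single_smul, single_gcast]
  congr 1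
  refine (hat_tup hμ _ _).symm.trans (congrArg _ ?_)
  funext t
  refine Fin.addCases (fun t => ?_) (fun t => ?_) t
  · rw [Fin.append_left]
    refine Fin.addCases (fun t => ?_) (fun t => ?_) t
    · simp only [tup, Fin.append_left, Fin.addCases_left, single_gcast]
    · simp only [tup, Fin.append_right, Fin.addCases_left, Fin.addCases_right,
        single_gcast]
      exact (hat_tup hν _ _).symm
  · simp only [tup, Fin.append_right, Fin.addCases_right, single_gcast]

theorem ev_comp₁ {a : ℕ} {r s : ℤ} {μ : MMap M N 1 r} {g : MMap L M a s}
    (hμ : IsMultilinear k μ) (hg : IsMultilinear k g) (d x) :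
    ev (comp₁ μ g) d x = hat k μ ![hat k g (tup d x)] := by
  simp only [ev, comp₁]
  rw [single_gcast]
  refine (hat_tup hμ _ _).symm.trans (congrArg _ ?_)
  funext t
  fin_cases t
  exact (hat_tup hg _ _).symm

theorem ev_comp₂ {a b : ℕ} {r s₁ s₂ : ℤ} {μ : MMap M N 2 r} {g₁ : MMap L M a s₁}
    {g₂ : MMap L M b s₂} (hμ : IsMultilinear k μ) (h₁ : IsMultilinear k g₁)
    (h₂ : IsMultilinear k g₂) (d x) :
    ev (comp₂ μ g₁ g₂) d x =
      ((-1 : ℤ) ^ (s₂ * ∑ j : Fin a, d (Fin.castAdd b j)).natAbs) •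
      hat k μ ![hat k g₁ fun j => tup d x (Fin.castAdd b j),
        hat k g₂ fun j => tup d x (Fin.natAdd a j)] := by
  simp only [ev, comp₂]
  rw [DFinsupp.single_smul, single_gcast]
  congr 1
  refine (hat_tup hμ _ _).symm.trans (congrArg _ ?_)
  simp only [tup_cons, tup_fin_one, hat_block, *]
  exact congrArg₂ Matrix.vecCons (single_gcast (L := M) _ _) <|
    congrArg (fun a => ![a]) (single_gcast (L := M) _ _)

theorem ev_comp₃ {a b c : ℕ} {r s₁ s₂ s₃ : ℤ} {μ : MMap M N 3 r} {g₁ : MMap L M a s₁}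
    {g₂ : MMap L M b s₂} {g₃ : MMap L M c s₃} (hμ : IsMultilinear k μ) (h₁ : IsMultilinear k g₁)
    (h₂ : IsMultilinear k g₂) (h₃ : IsMultilinear k g₃) (d x) :
    ev (comp₃ μ g₁ g₂ g₃) d x =
      ((-1 : ℤ) ^ (s₂ * (∑ j : Fin a, d (Fin.castAdd c (Fin.castAdd b j)))
        + s₃ * ((∑ j : Fin a, d (Fin.castAdd c (Fin.castAdd b j)))
          + ∑ j : Fin b, d (Fin.castAdd c (Fin.natAdd a j)))).natAbs) •
      hat k μ ![hat k g₁ fun j => tup d x (Fin.castAdd c (Fin.castAdd b j)),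
        hat k g₂ fun j => tup d x (Fin.castAdd c (Fin.natAdd a j)),
        hat k g₃ fun j => tup d x (Fin.natAdd (a + b) j)] := by
  simp only [ev, comp₃]
  rw [DFinsupp.single_smul, single_gcast]
  congr 1
  refine (hat_tup hμ _ _).symm.trans (congrArg _ ?_)
  simp only [tup_cons, tup_fin_one, hat_block, *]
  exact congrArg₂ Matrix.vecCons (single_gcast (L := M) _ _) <|
    congrArg₂ Matrix.vecCons (single_gcast (L := M) _ _) <|
    congrArg (fun a => ![a]) (single_gcast (L := M) _ _)

theorem ev_comp₄ {a b c e : ℕ} {r s₁ s₂ s₃ s₄ : ℤ} {μ : MMap M N 4 r} {g₁ : MMap L M a s₁}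
    {g₂ : MMap L M b s₂} {g₃ : MMap L M c s₃} {g₄ : MMap L M e s₄} (hμ : IsMultilinear k μ)
    (h₁ : IsMultilinear k g₁) (h₂ : IsMultilinear k g₂) (h₃ : IsMultilinear k g₃)
    (h₄ : IsMultilinear k g₄) (d x) :
    ev (comp₄ μ g₁ g₂ g₃ g₄) d x =
      ((-1 : ℤ) ^ (s₂ * (∑ j : Fin a, d (Fin.castAdd e (Fin.castAdd c (Fin.castAdd b j))))
        + s₃ * ((∑ j : Fin a, d (Fin.castAdd e (Fin.castAdd c (Fin.castAdd b j))))
          + ∑ j : Fin b, d (Fin.castAdd e (Fin.castAdd c (Fin.natAdd a j))))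
        + s₄ * ((∑ j : Fin a, d (Fin.castAdd e (Fin.castAdd c (Fin.castAdd b j))))
          + (∑ j : Fin b, d (Fin.castAdd e (Fin.castAdd c (Fin.natAdd a j))))
          + ∑ j : Fin c, d (Fin.castAdd e (Fin.natAdd (a + b) j)))).natAbs) •
      hat k μ ![hat k g₁ fun j => tup d x (Fin.castAdd e (Fin.castAdd c (Fin.castAdd b j))),
        hat k g₂ fun j => tup d x (Fin.castAdd e (Fin.castAdd c (Fin.natAdd a j))),
        hat k g₃ fun j => tup d x (Fin.castAdd e (Fin.natAdd (a + b) j)),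
        hat k g₄ fun j => tup d x (Fin.natAdd (a + b + c) j)] := by
  simp only [ev, comp₄]
  rw [DFinsupp.single_smul, single_gcast]
  congr 1
  refine (hat_tup hμ _ _).symm.trans (congrArg _ ?_)
  simp only [tup_cons, tup_fin_one, hat_block, *]
  exact congrArg₂ Matrix.vecCons (single_gcast (L := M) _ _) <|
    congrArg₂ Matrix.vecCons (single_gcast (L := M) _ _) <|
    congrArg₂ Matrix.vecCons (single_gcast (L := M) _ _) <|
    congrArg (fun a => ![a]) (single_gcast (L := M) _ _)

end Totalization

/-! ## Curried forms and signs -/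

section Curried

section
variable (k : Type) [CommRing k] {V W : Type}
  [AddCommGroup V] [AddCommGroup W] [Module k V] [Module k W]

/-- Currying of multilinear maps in one variable. -/
noncomputable def cur1 : MultilinearMap k (fun _ : Fin 1 => V) W →ₗ[k] V →ₗ[k] W :=
  LinearMap.compRight k
    (MultilinearMap.constLinearEquivOfIsEmpty k k (fun _ : Fin 0 => V) W).symm.toLinearMap ∘ₗ
    (multilinearCurryLeftEquiv k (fun _ : Fin 1 => V) W).toLinearMap

/-- Currying of multilinear maps in two variables. -/
noncomputable def cur2 : MultilinearMap k (fun _ : Fin 2 => V) W →ₗ[k] V →ₗ[k] V →ₗ[k] W :=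
  LinearMap.compRight k (cur1 k) ∘ₗ (multilinearCurryLeftEquiv k (fun _ : Fin 2 => V) W).toLinearMap

/-- Currying of multilinear maps in three variables. -/
noncomputable def cur3 :
    MultilinearMap k (fun _ : Fin 3 => V) W →ₗ[k] V →ₗ[k] V →ₗ[k] V →ₗ[k] W :=
  LinearMap.compRight k (cur2 k) ∘ₗ (multilinearCurryLeftEquiv k (fun _ : Fin 3 => V) W).toLinearMap

/-- Currying of multilinear maps in four variables. -/
noncomputable def cur4 :
    MultilinearMap k (fun _ : Fin 4 => V) W →ₗ[k] V →ₗ[k] V →ₗ[k] V →ₗ[k] V →ₗ[k] W :=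
  LinearMap.compRight k (cur3 k) ∘ₗ (multilinearCurryLeftEquiv k (fun _ : Fin 4 => V) W).toLinearMap

variable {k}

theorem cur1_apply (g : MultilinearMap k (fun _ : Fin 1 => V) W) (v) : g v = cur1 k g (v 0) := by
  refine congrArg g (funext fun t => ?_)
  fin_cases t
  rfl

theorem cur2_apply (g : MultilinearMap k (fun _ : Fin 2 => V) W) (v) :
    g v = cur2 k g (v 0) (v 1) := by
  refine congrArg g (funext fun t => ?_)
  fin_cases t <;> rfl

theorem cur3_apply (g : MultilinearMap k (fun _ : Fin 3 => V) W) (v) :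
    g v = cur3 k g (v 0) (v 1) (v 2) := by
  refine congrArg g (funext fun t => ?_)
  fin_cases t <;> rfl

theorem cur4_apply (g : MultilinearMap k (fun _ : Fin 4 => V) W) (v) :
    g v = cur4 k g (v 0) (v 1) (v 2) (v 3) := by
  refine congrArg g (funext fun t => ?_)
  fin_cases t <;> rfl

end

variable (k : Type) [CommRing k] {L M N : ℤ → Type}
  [∀ i, AddCommGroup (L i)] [∀ i, Module k (L i)]
  [∀ i, AddCommGroup (M i)] [∀ i, Module k (M i)]
  [∀ i, AddCommGroup (N i)] [∀ i, Module k (N i)]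

/-- The linear map on total modules induced by a linear graded map. -/
noncomputable def h1 {r : ℤ} (μ : MMap L M 1 r) : Tot L →ₗ[k] Tot M := cur1 k (hat k μ)

/-- The bilinear map on total modules induced by a bilinear graded map. -/
noncomputable def h2 {r : ℤ} (μ : MMap L M 2 r) : Tot L →ₗ[k] Tot L →ₗ[k] Tot M :=
  cur2 k (hat k μ)

/-- The trilinear map on total modules induced by a trilinear graded map. -/
noncomputable def h3 {r : ℤ} (μ : MMap L M 3 r) : Tot L →ₗ[k] Tot L →ₗ[k] Tot L →ₗ[k] Tot M :=
  cur3 k (hat k μ)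

/-- The quadrilinear map on total modules induced by a quadrilinear graded map. -/
noncomputable def h4 {r : ℤ} (μ : MMap L M 4 r) :
    Tot L →ₗ[k] Tot L →ₗ[k] Tot L →ₗ[k] Tot L →ₗ[k] Tot M :=
  cur4 k (hat k μ)

variable {k}

theorem hat_one {r : ℤ} (μ : MMap L M 1 r) (v) : hat k μ v = h1 k μ (v 0) := cur1_apply _ _

theorem hat_two {r : ℤ} (μ : MMap L M 2 r) (v) : hat k μ v = h2 k μ (v 0) (v 1) := cur2_apply _ _

theorem hat_three {r : ℤ} (μ : MMap L M 3 r) (v) :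
    hat k μ v = h3 k μ (v 0) (v 1) (v 2) := cur3_apply _ _

theorem hat_four {r : ℤ} (μ : MMap L M 4 r) (v) :
    hat k μ v = h4 k μ (v 0) (v 1) (v 2) (v 3) := cur4_apply _ _

/-- The sign `(-1)^n`. -/
def sg (n : ℤ) : ℤ := (-1) ^ n.natAbs

theorem ev_one {r : ℤ} {μ : MMap L M 1 r} (h : IsMultilinear k μ) (d x) :
    ev μ d x = h1 k μ (tup d x 0) := by rw [← hat_tup h, hat_one]

theorem ev_two {r : ℤ} {μ : MMap L M 2 r} (h : IsMultilinear k μ) (d x) :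
    ev μ d x = h2 k μ (tup d x 0) (tup d x 1) := by rw [← hat_tup h, hat_two]

theorem ev_three {r : ℤ} {μ : MMap L M 3 r} (h : IsMultilinear k μ) (d x) :
    ev μ d x = h3 k μ (tup d x 0) (tup d x 1) (tup d x 2) := by rw [← hat_tup h, hat_three]

theorem ev_fc1 {R r s : ℤ} {a : ℕ} {μ : MMap M N 1 r} {g : MMap L M a s}
    (hμ : IsMultilinear k μ) (hg : IsMultilinear k g) (h : r + s = R) (d x) :
    ev (fc1 R μ g h) d x = h1 k μ (hat k g (tup d x)) := by
  rw [fc1, ev_mcast, ev_comp₁ hμ hg, hat_one]; rfl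

theorem ev_pc_0_1 {n : ℕ} {R r s : ℤ} {μ : MMap L M 2 r} {ν : MMap L L n s}
    (hμ : IsMultilinear k μ) (hν : IsMultilinear k ν) (h : r + s = R) (d x) :
    ev (pc R 0 1 μ ν h) d x = h2 k μ (hat k ν fun j => tup d x (Fin.castAdd 1 (Fin.natAdd 0 j)))
        (tup d x (Fin.natAdd (0 + n) 0)) := by
  rw [pc, ev_mcast, ev_pcomp hμ hν, hat_two]
  simp only [univ_eq_empty, sum_empty, mul_zero, Int.natAbs_zero, pow_zero, one_smul]
  rfl

theorem ev_pc_1_0 {n : ℕ} {R r s : ℤ} {μ : MMap L M 2 r} {ν : MMap L L n s}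
    (hμ : IsMultilinear k μ) (hν : IsMultilinear k ν) (h : r + s = R) (d x) :
    ev (pc R 1 0 μ ν h) d x = sg (s * d (Fin.castAdd 0 (Fin.castAdd n 0))) •
      h2 k μ (tup d x (Fin.castAdd 0 (Fin.castAdd n 0)))
      (hat k ν fun j => tup d x (Fin.castAdd 0 (Fin.natAdd 1 j))) := by
  rw [pc, ev_mcast, ev_pcomp hμ hν, hat_two]
  simp only [univ_unique, Finset.sum_singleton]
  rfl

theorem ev_pc_0_2 {n : ℕ} {R r s : ℤ} {μ : MMap L M 3 r} {ν : MMap L L n s}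
    (hμ : IsMultilinear k μ) (hν : IsMultilinear k ν) (h : r + s = R) (d x) :
    ev (pc R 0 2 μ ν h) d x = h3 k μ (hat k ν fun j => tup d x (Fin.castAdd 2 (Fin.natAdd 0 j)))
        (tup d x (Fin.natAdd (0 + n) 0)) (tup d x (Fin.natAdd (0 + n) 1)) := by
  rw [pc, ev_mcast, ev_pcomp hμ hν, hat_three]
  simp only [univ_eq_empty, sum_empty, mul_zero, Int.natAbs_zero, pow_zero, one_smul]
  rfl

theorem ev_pc_1_1 {n : ℕ} {R r s : ℤ} {μ : MMap L M 3 r} {ν : MMap L L n s}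
    (hμ : IsMultilinear k μ) (hν : IsMultilinear k ν) (h : r + s = R) (d x) :
    ev (pc R 1 1 μ ν h) d x = sg (s * d (Fin.castAdd 1 (Fin.castAdd n 0))) •
      h3 k μ (tup d x (Fin.castAdd 1 (Fin.castAdd n 0)))
      (hat k ν fun j => tup d x (Fin.castAdd 1 (Fin.natAdd 1 j)))
      (tup d x (Fin.natAdd (1 + n) 0)) := by
  rw [pc, ev_mcast, ev_pcomp hμ hν, hat_three]
  simp only [univ_unique, Finset.sum_singleton]
  rfl

theorem ev_pc_2_0 {n : ℕ} {R r s : ℤ} {μ : MMap L M 3 r} {ν : MMap L L n s}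
    (hμ : IsMultilinear k μ) (hν : IsMultilinear k ν) (h : r + s = R) (d x) :
    ev (pc R 2 0 μ ν h) d x =
      sg (s * (d (Fin.castAdd 0 (Fin.castAdd n 0)) + d (Fin.castAdd 0 (Fin.castAdd n 1)))) •
      h3 k μ (tup d x (Fin.castAdd 0 (Fin.castAdd n 0)))
      (tup d x (Fin.castAdd 0 (Fin.castAdd n 1)))
      (hat k ν fun j => tup d x (Fin.castAdd 0 (Fin.natAdd 2 j))) := by
  rw [pc, ev_mcast, ev_pcomp hμ hν, hat_three]
  simp only [Fin.sum_univ_two]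
  rfl

theorem ev_bd_one {R r : ℤ} {D' : MMap M M 1 (-1)} {D : MMap L L 1 (-1)} {μ : MMap L M 1 r}
    (hD' : IsMultilinear k D') (hD : IsMultilinear k D) (hμ : IsMultilinear k μ)
    (h : -1 + r = R) (d x) :
    ev (bd R D' D μ h) d x = h1 k D' (h1 k μ (tup d x 0)) - sg r • h1 k μ (h1 k D (tup d x 0)) := by
  rw [bd, ev_mcast, bdry, ev_sub, ev_zsmul, ev_sum, ev_comp₁ hD' hμ, hat_one, hat_one]
  simp only [Fin.sum_univ_one, ev_mcast]
  rw [ev_pcomp (isMultilinear_mcast _ _ hμ) hD, hat_mcast, hat_one, hat_one]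
  simp
  rfl

theorem ev_bd_two {R r : ℤ} {D' : MMap M M 1 (-1)} {D : MMap L L 1 (-1)} {μ : MMap L M 2 r}
    (hD' : IsMultilinear k D') (hD : IsMultilinear k D) (hμ : IsMultilinear k μ)
    (h : -1 + r = R) (d x) :
    ev (bd R D' D μ h) d x = h1 k D' (h2 k μ (tup d x 0) (tup d x 1)) -
      sg r • (h2 k μ (h1 k D (tup d x 0)) (tup d x 1) +
        sg (d 0) • h2 k μ (tup d x 0) (h1 k D (tup d x 1))) := by
  rw [bd, ev_mcast, bdry, ev_sub, ev_zsmul, ev_sum, ev_comp₁ hD' hμ, hat_one, hat_two]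
  simp only [Fin.sum_univ_two, ev_mcast]
  rw [ev_pcomp (isMultilinear_mcast _ _ hμ) hD, ev_pcomp (isMultilinear_mcast _ _ hμ) hD, hat_mcast,
    hat_mcast, hat_one, hat_two, hat_one, hat_two]
  simp
  rfl

theorem ev_bd_three {R r : ℤ} {D' : MMap M M 1 (-1)} {D : MMap L L 1 (-1)} {μ : MMap L M 3 r}
    (hD' : IsMultilinear k D') (hD : IsMultilinear k D) (hμ : IsMultilinear k μ)
    (h : -1 + r = R) (d x) :
    ev (bd R D' D μ h) d x = h1 k D' (h3 k μ (tup d x 0) (tup d x 1) (tup d x 2)) -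
      sg r • (h3 k μ (h1 k D (tup d x 0)) (tup d x 1) (tup d x 2) +
        sg (d 0) • h3 k μ (tup d x 0) (h1 k D (tup d x 1)) (tup d x 2) +
        sg (d 0 + d 1) • h3 k μ (tup d x 0) (tup d x 1) (h1 k D (tup d x 2))) := by
  rw [bd, ev_mcast, bdry, ev_sub, ev_zsmul, ev_sum, ev_comp₁ hD' hμ, hat_one, hat_three]
  simp only [Fin.sum_univ_three, ev_mcast]
  rw [ev_pcomp (isMultilinear_mcast _ _ hμ) hD, ev_pcomp (isMultilinear_mcast _ _ hμ) hD,
    ev_pcomp (isMultilinear_mcast _ _ hμ) hD]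
  simp only [hat_mcast, hat_one, hat_three]
  simp [Fin.sum_univ_two]
  rw [← Int.natAbs_neg (_ + _), neg_add_rev, neg_neg, neg_neg]
  rfl

theorem ev_fc2 {a b : ℕ} {R r s₁ s₂ : ℤ} {μ : MMap M N 2 r} {g₁ : MMap L M a s₁}
    {g₂ : MMap L M b s₂} (hμ : IsMultilinear k μ) (h₁ : IsMultilinear k g₁)
    (h₂ : IsMultilinear k g₂) (h : r + (s₁ + s₂) = R) (d x) :
    ev (fc2 R μ g₁ g₂ h) d x = sg (s₂ * ∑ j : Fin a, d (Fin.castAdd b j)) •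
      h2 k μ (hat k g₁ fun j => tup d x (Fin.castAdd b j))
        (hat k g₂ fun j => tup d x (Fin.natAdd a j)) := by
  rw [fc2, ev_mcast, ev_comp₂ hμ h₁ h₂, hat_two]
  rfl

theorem ev_fc3 {a b c : ℕ} {R r s₁ s₂ s₃ : ℤ} {μ : MMap M N 3 r} {g₁ : MMap L M a s₁}
    {g₂ : MMap L M b s₂} {g₃ : MMap L M c s₃} (hμ : IsMultilinear k μ) (h₁ : IsMultilinear k g₁)
    (h₂ : IsMultilinear k g₂) (h₃ : IsMultilinear k g₃) (h : r + (s₁ + s₂ + s₃) = R) (d x) :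
    ev (fc3 R μ g₁ g₂ g₃ h) d x =
      sg (s₂ * (∑ j : Fin a, d (Fin.castAdd c (Fin.castAdd b j)))
        + s₃ * ((∑ j : Fin a, d (Fin.castAdd c (Fin.castAdd b j)))
          + ∑ j : Fin b, d (Fin.castAdd c (Fin.natAdd a j)))) •
      h3 k μ (hat k g₁ fun j => tup d x (Fin.castAdd c (Fin.castAdd b j)))
        (hat k g₂ fun j => tup d x (Fin.castAdd c (Fin.natAdd a j)))
        (hat k g₃ fun j => tup d x (Fin.natAdd (a + b) j)) := by
  rw [fc3, ev_mcast, ev_comp₃ hμ h₁ h₂ h₃, hat_three]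
  rfl

theorem ev_fc4 {a b c e : ℕ} {R r s₁ s₂ s₃ s₄ : ℤ} {μ : MMap M N 4 r} {g₁ : MMap L M a s₁}
    {g₂ : MMap L M b s₂} {g₃ : MMap L M c s₃} {g₄ : MMap L M e s₄} (hμ : IsMultilinear k μ)
    (h₁ : IsMultilinear k g₁) (h₂ : IsMultilinear k g₂) (h₃ : IsMultilinear k g₃)
    (h₄ : IsMultilinear k g₄) (h : r + (s₁ + s₂ + s₃ + s₄) = R) (d x) :
    ev (fc4 R μ g₁ g₂ g₃ g₄ h) d x =
      sg (s₂ * (∑ j : Fin a, d (Fin.castAdd e (Fin.castAdd c (Fin.castAdd b j))))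
        + s₃ * ((∑ j : Fin a, d (Fin.castAdd e (Fin.castAdd c (Fin.castAdd b j))))
          + ∑ j : Fin b, d (Fin.castAdd e (Fin.castAdd c (Fin.natAdd a j))))
        + s₄ * ((∑ j : Fin a, d (Fin.castAdd e (Fin.castAdd c (Fin.castAdd b j))))
          + (∑ j : Fin b, d (Fin.castAdd e (Fin.castAdd c (Fin.natAdd a j))))
          + ∑ j : Fin c, d (Fin.castAdd e (Fin.natAdd (a + b) j)))) •
      h4 k μ (hat k g₁ fun j => tup d x (Fin.castAdd e (Fin.castAdd c (Fin.castAdd b j))))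
        (hat k g₂ fun j => tup d x (Fin.castAdd e (Fin.castAdd c (Fin.natAdd a j))))
        (hat k g₃ fun j => tup d x (Fin.castAdd e (Fin.natAdd (a + b) j)))
        (hat k g₄ fun j => tup d x (Fin.natAdd (a + b + c) j)) := by
  rw [fc4, ev_mcast, ev_comp₄ hμ h₁ h₂ h₃ h₄, hat_four]
  rfl

@[simp] theorem sg_zero : sg 0 = 1 := rfl

@[simp] theorem sg_one : sg 1 = -1 := rfl

@[simp] theorem sg_two : sg 2 = 1 := rfl

theorem sg_neg (a : ℤ) : sg (-a) = sg a := by simp [sg]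

@[simp] theorem sg_two_mul (a : ℤ) : sg (2 * a) = 1 := by simp [sg, Int.natAbs_mul, pow_mul]

theorem sg_even {a : ℤ} (h : Even a) : sg a = 1 := by
  rw [sg, Even.neg_one_pow (Int.natAbs_even.2 h)]

theorem sg_odd {a : ℤ} (h : Odd a) : sg a = -1 := by
  rw [sg, Odd.neg_one_pow (Int.natAbs_odd.2 h)]

theorem sg_eq_or (a : ℤ) : sg a = 1 ∨ sg a = -1 :=
  (Int.even_or_odd a).imp sg_even sg_odd

theorem sg_add (a b : ℤ) : sg (a + b) = sg a * sg b := by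
  rcases Int.even_or_odd a with ha | ha <;> rcases Int.even_or_odd b with hb | hb
  · rw [sg_even ha, sg_even hb, sg_even (ha.add hb)]; rfl
  · rw [sg_even ha, sg_odd hb, sg_odd (ha.add_odd hb)]; rfl
  · rw [sg_odd ha, sg_even hb, sg_odd (ha.add_even hb)]; rfl
  · rw [sg_odd ha, sg_odd hb, sg_even (ha.add_odd hb)]; rfl

theorem koszulSign_zero {m : ℕ} (σ : Equiv.Perm (Fin m)) : koszulSign (fun _ => 0) σ = 1 := by
  simp [koszulSign]

theorem koszulSign_P12_two (d : Fin 2 → ℤ) : koszulSign d (P12 2) = sg (d 0 * d 1) := by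
  have : (univ.filter fun p : Fin 2 × Fin 2 => p.1 < p.2 ∧ P12 2 p.2 < P12 2 p.1) = {(0, 1)} := by
    decide
  rw [koszulSign, this, prod_singleton]; rfl

theorem koszulSign_P12_three (d : Fin 3 → ℤ) : koszulSign d (P12 3) = sg (d 0 * d 1) := by
  have : (univ.filter fun p : Fin 3 × Fin 3 => p.1 < p.2 ∧ P12 3 p.2 < P12 3 p.1) = {(0, 1)} := by
    decide
  rw [koszulSign, this, prod_singleton]; rfl

end Curried

/-! ## The equations of a weak morphism on homogeneous elements -/

section Equations

variable {k : Type} [CommRing k] {L M N : ℤ → Type}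
  [∀ i, AddCommGroup (L i)] [∀ i, Module k (L i)]
  [∀ i, AddCommGroup (M i)] [∀ i, Module k (M i)]
  [∀ i, AddCommGroup (N i)] [∀ i, Module k (N i)]

/-- Homogeneity of degree `i` of an element of the total module. -/
def Hom (i : ℤ) (v : Tot L) : Prop := ∃ x : L i, v = DFinsupp.single i x

theorem Hom.tup {m : ℕ} (d : Fin m → ℤ) (x : ∀ j, L (d j)) (t) : Hom (d t) (tup d x t) :=
  ⟨x t, rfl⟩

theorem forall_tup_one (P : ℤ → Tot L → Prop) :
    (∀ (d : Fin 1 → ℤ) x, P (d 0) (tup d x 0)) ↔ ∀ i a, Hom i a → P i a := by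
  refine ⟨?_, fun h d x => h _ _ (.tup d x 0)⟩
  rintro h i _ ⟨x, rfl⟩
  exact h ![i] (Fin.cons x finZeroElim)

theorem forall_tup_two (P : ℤ → ℤ → Tot L → Tot L → Prop) :
    (∀ (d : Fin 2 → ℤ) x, P (d 0) (d 1) (tup d x 0) (tup d x 1)) ↔
      ∀ i j a b, Hom i a → Hom j b → P i j a b := by
  refine ⟨?_, fun h d x => h _ _ _ _ (.tup d x 0) (.tup d x 1)⟩
  rintro h i j _ _ ⟨x, rfl⟩ ⟨y, rfl⟩
  exact h ![i, j] (Fin.cons x (Fin.cons y finZeroElim))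

theorem forall_tup_three (P : ℤ → ℤ → ℤ → Tot L → Tot L → Tot L → Prop) :
    (∀ (d : Fin 3 → ℤ) x, P (d 0) (d 1) (d 2) (tup d x 0) (tup d x 1) (tup d x 2)) ↔
      ∀ i j l a b c, Hom i a → Hom j b → Hom l c → P i j l a b c := by
  refine ⟨?_, fun h d x => h _ _ _ _ _ _ (.tup d x 0) (.tup d x 1) (.tup d x 2)⟩
  rintro h i j l _ _ _ ⟨x, rfl⟩ ⟨y, rfl⟩ ⟨z, rfl⟩
  exact h ![i, j, l] (Fin.cons x (Fin.cons y (Fin.cons z finZeroElim)))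

variable (A : WeakLie3 k L) (B : WeakLie3 k M) {f1 : MMap L M 1 0} {f2 : MMap L M 2 1}
  {f21 : MMap L M 2 2} {f3 : MMap L M 3 2}

theorem m1_iff (l1 : IsMultilinear k f1) : bd (-1) B.D A.D f1 = 0 ↔
    ∀ i a, Hom i a → h1 k B.D (h1 k f1 a) - h1 k f1 (h1 k A.D a) = 0 := by
  rw [ev_injective, ← forall_tup_one]
  refine forall₂_congr fun d x => ?_
  rw [ev_bd_one B.linD A.linD l1, ev_zero, sg_zero, one_smul]

theorem m2_iff (l1 : IsMultilinear k f1) (l2 : IsMultilinear k f2) :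
    bd 0 B.D A.D f2 = fc1 0 f1 A.l2 - fc2 0 B.l2 f1 f1 ↔
    ∀ i j a b, Hom i a → Hom j b →
      h1 k B.D (h2 k f2 a b) + h2 k f2 (h1 k A.D a) b + sg i • h2 k f2 a (h1 k A.D b) =
      h1 k f1 (h2 k A.l2 a b) - h2 k B.l2 (h1 k f1 a) (h1 k f1 b) := by
  rw [ev_injective, ← forall_tup_two fun i j a b => _ = _]
  refine forall₂_congr fun d x => ?_
  rw [ev_bd_two B.linD A.linD l2, ev_sub, ev_fc1 l1 A.leib.lin2, ev_fc2 B.leib.lin2 l1 l1]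
  simp only [hat_one, hat_two, sg_one, zero_mul, sg_zero, one_smul, neg_smul, sub_neg_eq_add,
    add_assoc]
  rfl

theorem m3_iff (l1 : IsMultilinear k f1) (l2 : IsMultilinear k f2) (l3 : IsMultilinear k f3) :
    bd 1 B.D A.D f3 = fc1 1 f1 A.l3 - pc 1 1 0 f2 A.l2 + pc 1 0 1 f2 A.l2
        + pa (P12 3) (pc 1 1 0 f2 A.l2) - fc3 1 B.l3 f1 f1 f1 - fc2 1 B.l2 f1 f2
        + fc2 1 B.l2 f2 f1 + pa (P12 3) (fc2 1 B.l2 f1 f2) ↔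
    ∀ i j l a b c, Hom i a → Hom j b → Hom l c →
      h1 k B.D (h3 k f3 a b c) - h3 k f3 (h1 k A.D a) b c - sg i • h3 k f3 a (h1 k A.D b) c
        - sg (i + j) • h3 k f3 a b (h1 k A.D c) =
      h1 k f1 (h3 k A.l3 a b c) - h2 k f2 a (h2 k A.l2 b c) + h2 k f2 (h2 k A.l2 a b) c
        + sg (i * j) • h2 k f2 b (h2 k A.l2 a c)
        - h3 k B.l3 (h1 k f1 a) (h1 k f1 b) (h1 k f1 c) - sg i • h2 k B.l2 (h1 k f1 a) (h2 k f2 b c)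
        + h2 k B.l2 (h2 k f2 a b) (h1 k f1 c)
        + sg (i * j) • sg j • h2 k B.l2 (h1 k f1 b) (h2 k f2 a c) := by
  rw [ev_injective, ← forall_tup_three fun i j l a b c => _ = _]
  refine forall₂_congr fun d x => ?_
  rw [ev_bd_three B.linD A.linD l3]
  simp only [ev_add, ev_sub, ev_fc1 (k := k), ev_fc2 (k := k), ev_fc3 (k := k), ev_pa,
    ev_pc_0_1 (k := k), ev_pc_1_0 (k := k), l1, l2, A.leib.lin2, A.leib.lin3, B.leib.lin2,
    B.leib.lin3, hat_one, hat_two, hat_three, koszulSign_P12_three, zero_mul, one_mul,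
    add_zero, Fin.sum_univ_one, sg_zero, sg_two, one_smul, Fin.sum_univ_two, sub_sub, add_assoc]
  rfl

theorem m5_iff (l1 : IsMultilinear k f1) (l2 : IsMultilinear k f2) (l21 : IsMultilinear k f21) :
    bd 1 B.D A.D f21 = - f2 - pa (P12 2) f2 + fc1 1 f1 A.l21 - fc2 1 B.l21 f1 f1 ↔
    ∀ i j a b, Hom i a → Hom j b →
      h1 k B.D (h2 k f21 a b) - h2 k f21 (h1 k A.D a) b - sg i • h2 k f21 a (h1 k A.D b) =
      - h2 k f2 a b - sg (i * j) • h2 k f2 b a + h1 k f1 (h2 k A.l21 a b)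
        - h2 k B.l21 (h1 k f1 a) (h1 k f1 b) := by
  rw [ev_injective, ← forall_tup_two fun i j a b => _ = _]
  refine forall₂_congr fun d x => ?_
  rw [ev_bd_two B.linD A.linD l21]
  simp only [ev_add, ev_sub, ev_neg, ev_fc1 (k := k), ev_fc2 (k := k), ev_pa, ev_two (k := k),
    l1, l2, A.lin21, B.lin21, hat_one, hat_two, koszulSign_P12_two, zero_mul,
    sg_zero, sg_two, one_smul, sub_sub]
  rfl

theorem eq_of_degree_two (A : WeakLie3 k L) (B : WeakLie3 k M) {m : ℕ} {μ ν : MMap L M m 2}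
    (hz : ∀ d x j, tup d x j = 0 → ev μ d x = ev ν d x)
    (h0 : ∀ x, ev μ (fun _ => 0) x = ev ν (fun _ => 0) x) : μ = ν := by
  rw [ev_injective]
  intro d x
  by_cases hn : ∃ j, d j < 0
  · obtain ⟨j, hj⟩ := hn
    refine hz d x j ?_
    rw [tup, A.bound _ (.inl hj) (x j), DFinsupp.single_zero]
  push Not at hn
  by_cases hd : d = fun _ => 0
  · subst hd
    exact h0 x
  · have hpos : 0 < ∑ j, d j := by
      obtain ⟨j, hj⟩ := Function.ne_iff.1 hd
      exact Finset.sum_pos' (fun j _ => hn j) ⟨j, mem_univ j, lt_of_le_of_ne (hn j) (Ne.symm hj)⟩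
    rw [ev, ev, B.bound _ (.inr (by omega)) (μ d x), B.bound _ (.inr (by omega)) (ν d x)]

theorem m6_iff (l1 : IsMultilinear k f1) (l21 : IsMultilinear k f21) :
    fc1 2 f1 A.l211 - fc2 2 B.l211 f1 f1 = f21 - pa (P12 2) f21 ↔
    ∀ a b, Hom 0 a → Hom 0 b →
      h1 k f1 (h2 k A.l211 a b) - h2 k B.l211 (h1 k f1 a) (h1 k f1 b) =
        h2 k f21 a b - h2 k f21 b a := by
  have key (d x) : ev (fc1 2 f1 A.l211 - fc2 2 B.l211 f1 f1) d x =
      ev (f21 - pa (P12 2) f21) d x ↔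
      h1 k f1 (h2 k A.l211 (tup d x 0) (tup d x 1)) -
        h2 k B.l211 (h1 k f1 (tup d x 0)) (h1 k f1 (tup d x 1)) =
      h2 k f21 (tup d x 0) (tup d x 1) -
        koszulSign d (P12 2) • h2 k f21 (tup d x 1) (tup d x 0) := by
    simp only [ev_sub, ev_fc1 (k := k), ev_fc2 (k := k), ev_pa, ev_two (k := k),
      l1, l21, A.lin211, B.lin211, hat_one, hat_two, zero_mul, sg_zero, one_smul]
    rfl
  constructor
  · rintro h _ _ ⟨a, rfl⟩ ⟨b, rfl⟩
    have := (key (fun _ => 0) ![a, b]).1 (by rw [h])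
    rwa [koszulSign_zero, one_smul] at this
  · intro h
    refine eq_of_degree_two A B (fun d x j hj => ?_) (fun x => ?_)
    · rw [key]
      fin_cases j <;> simp_all
    · rw [key, koszulSign_zero, one_smul]
      exact h _ _ (.tup _ x 0) (.tup _ x 1)

theorem m7_iff (l1 : IsMultilinear k f1) (l2 : IsMultilinear k f2) (l21 : IsMultilinear k f21)
    (l3 : IsMultilinear k f3) :
    fc1 2 f1 A.l31 - fc3 2 B.l31 f1 f1 f1 =
        f3 + pa (P12 3) f3 + pc 2 0 1 f2 A.l21 + fc2 2 B.l2 f21 f1 ↔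
    ∀ a b c, Hom 0 a → Hom 0 b → Hom 0 c →
      h1 k f1 (h3 k A.l31 a b c) - h3 k B.l31 (h1 k f1 a) (h1 k f1 b) (h1 k f1 c) =
        h3 k f3 a b c + h3 k f3 b a c + h2 k f2 (h2 k A.l21 a b) c +
          h2 k B.l2 (h2 k f21 a b) (h1 k f1 c) := by
  have key (d x) : ev (fc1 2 f1 A.l31 - fc3 2 B.l31 f1 f1 f1) d x =
      ev (f3 + pa (P12 3) f3 + pc 2 0 1 f2 A.l21 + fc2 2 B.l2 f21 f1) d x ↔
      h1 k f1 (h3 k A.l31 (tup d x 0) (tup d x 1) (tup d x 2)) -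
        h3 k B.l31 (h1 k f1 (tup d x 0)) (h1 k f1 (tup d x 1)) (h1 k f1 (tup d x 2)) =
      h3 k f3 (tup d x 0) (tup d x 1) (tup d x 2) +
        koszulSign d (P12 3) • h3 k f3 (tup d x 1) (tup d x 0) (tup d x 2) +
        h2 k f2 (h2 k A.l21 (tup d x 0) (tup d x 1)) (tup d x 2) +
        h2 k B.l2 (h2 k f21 (tup d x 0) (tup d x 1)) (h1 k f1 (tup d x 2)) := by
    simp only [ev_add, ev_sub, ev_fc1 (k := k), ev_fc2 (k := k), ev_fc3 (k := k), ev_pa,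
      ev_pc_0_1 (k := k), ev_three (k := k), l1, l2, l21, l3, A.lin31, B.lin31, A.lin21,
      B.leib.lin2, hat_one, hat_two, hat_three, zero_mul, add_zero, sg_zero, one_smul]
    rfl
  constructor
  · rintro h _ _ _ ⟨a, rfl⟩ ⟨b, rfl⟩ ⟨c, rfl⟩
    have := (key (fun _ => 0) ![a, b, c]).1 (by rw [h])
    rwa [koszulSign_zero, one_smul] at this
  · intro h
    refine eq_of_degree_two A B (fun d x j hj => ?_) (fun x => ?_)
    · rw [key]
      fin_cases j <;> simp_all
    · rw [key, koszulSign_zero, one_smul]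
      exact h _ _ _ (.tup _ x 0) (.tup _ x 1) (.tup _ x 2)

theorem m8_iff (l1 : IsMultilinear k f1) (l2 : IsMultilinear k f2) (l21 : IsMultilinear k f21)
    (l3 : IsMultilinear k f3) :
    fc1 2 f1 A.l32 - fc3 2 B.l32 f1 f1 f1 =
        f3 + pa (P23 3) f3 - pc 2 1 0 f2 A.l21 + pc 2 0 1 f21 A.l2
        + pa (P12 3) (pc 2 1 0 f21 A.l2) - fc2 2 B.l2 f1 f21 - fc2 2 B.l21 f2 f1
        - pa (P12 3) (fc2 2 B.l21 f1 f2) ↔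
    ∀ a b c, Hom 0 a → Hom 0 b → Hom 0 c →
      h1 k f1 (h3 k A.l32 a b c) - h3 k B.l32 (h1 k f1 a) (h1 k f1 b) (h1 k f1 c) =
        h3 k f3 a b c + h3 k f3 a c b - h2 k f2 a (h2 k A.l21 b c) +
          h2 k f21 (h2 k A.l2 a b) c + h2 k f21 b (h2 k A.l2 a c) -
          h2 k B.l2 (h1 k f1 a) (h2 k f21 b c) - h2 k B.l21 (h2 k f2 a b) (h1 k f1 c) -
          h2 k B.l21 (h1 k f1 b) (h2 k f2 a c) := by
  have key (d x) : ev (fc1 2 f1 A.l32 - fc3 2 B.l32 f1 f1 f1) d x =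
      ev (f3 + pa (P23 3) f3 - pc 2 1 0 f2 A.l21 + pc 2 0 1 f21 A.l2
        + pa (P12 3) (pc 2 1 0 f21 A.l2) - fc2 2 B.l2 f1 f21 - fc2 2 B.l21 f2 f1
        - pa (P12 3) (fc2 2 B.l21 f1 f2)) d x ↔
      h1 k f1 (h3 k A.l32 (tup d x 0) (tup d x 1) (tup d x 2)) -
        h3 k B.l32 (h1 k f1 (tup d x 0)) (h1 k f1 (tup d x 1)) (h1 k f1 (tup d x 2)) =
      h3 k f3 (tup d x 0) (tup d x 1) (tup d x 2) +
        koszulSign d (P23 3) • h3 k f3 (tup d x 0) (tup d x 2) (tup d x 1) -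
        sg (d 0) • h2 k f2 (tup d x 0) (h2 k A.l21 (tup d x 1) (tup d x 2)) +
        h2 k f21 (h2 k A.l2 (tup d x 0) (tup d x 1)) (tup d x 2) +
        koszulSign d (P12 3) • h2 k f21 (tup d x 1) (h2 k A.l2 (tup d x 0) (tup d x 2)) -
        h2 k B.l2 (h1 k f1 (tup d x 0)) (h2 k f21 (tup d x 1) (tup d x 2)) -
        h2 k B.l21 (h2 k f2 (tup d x 0) (tup d x 1)) (h1 k f1 (tup d x 2)) -
        koszulSign d (P12 3) • sg (d 1) •
          h2 k B.l21 (h1 k f1 (tup d x 1)) (h2 k f2 (tup d x 0) (tup d x 2)) := by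
    simp only [ev_add, ev_sub, ev_fc1 (k := k), ev_fc2 (k := k), ev_fc3 (k := k), ev_pa,
      ev_pc_0_1 (k := k), ev_pc_1_0 (k := k), ev_three (k := k), l1, l2, l21, l3, A.lin32, B.lin32,
      A.lin21, B.lin21, A.leib.lin2, B.leib.lin2, hat_one, hat_two, hat_three, zero_mul, one_mul,
      add_zero, sg_zero, sg_two_mul, one_smul, Fin.sum_univ_one]
    rfl
  constructor
  · rintro h _ _ _ ⟨a, rfl⟩ ⟨b, rfl⟩ ⟨c, rfl⟩
    have := (key (fun _ => 0) ![a, b, c]).1 (by rw [h])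
    simp only [koszulSign_zero, one_smul, sg_zero] at this
    exact this
  · intro h
    refine eq_of_degree_two A B (fun d x j hj => ?_) (fun x => ?_)
    · rw [key]
      fin_cases j <;> simp_all
    · rw [key]
      simp only [koszulSign_zero, one_smul, sg_zero]
      exact h _ _ _ (.tup _ x 0) (.tup _ x 1) (.tup _ x 2)

theorem m4_iff (l1 : IsMultilinear k f1) (l2 : IsMultilinear k f2) (l3 : IsMultilinear k f3) :
    fc1 2 f1 A.l4 - fc4 2 B.l4 f1 f1 f1 f1 =
        pc 2 0 1 f2 A.l3 + pc 2 1 0 f2 A.l3 - pa (P12 4) (pc 2 1 0 f2 A.l3)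
        + pa (P123 4) (pc 2 1 0 f2 A.l3) - pc 2 0 2 f3 A.l2 + pc 2 1 1 f3 A.l2
        - pa (P12 4) (pc 2 1 1 f3 A.l2) - pc 2 2 0 f3 A.l2 + pa (P23 4) (pc 2 2 0 f3 A.l2)
        - pa (P132 4) (pc 2 2 0 f3 A.l2) + fc2 2 B.l2 f3 f1 + fc2 2 B.l2 f1 f3
        - pa (P12 4) (fc2 2 B.l2 f1 f3) + pa (P123 4) (fc2 2 B.l2 f1 f3)
        - fc2 2 B.l2 f2 f2 + pa (P23 4) (fc2 2 B.l2 f2 f2) - pa (P132 4) (fc2 2 B.l2 f2 f2)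
        + fc3 2 B.l3 f2 f1 f1 - fc3 2 B.l3 f1 f2 f1 + pa (P12 4) (fc3 2 B.l3 f1 f2 f1)
        + fc3 2 B.l3 f1 f1 f2 - pa (P23 4) (fc3 2 B.l3 f1 f1 f2)
        + pa (P132 4) (fc3 2 B.l3 f1 f1 f2) ↔
    ∀ a b c e, Hom 0 a → Hom 0 b → Hom 0 c → Hom 0 e →
      h1 k f1 (h4 k A.l4 a b c e) - h4 k B.l4 (h1 k f1 a) (h1 k f1 b) (h1 k f1 c) (h1 k f1 e) =
        h2 k f2 (h3 k A.l3 a b c) e + h2 k f2 a (h3 k A.l3 b c e) - h2 k f2 b (h3 k A.l3 a c e) +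
        h2 k f2 c (h3 k A.l3 a b e) - h3 k f3 (h2 k A.l2 a b) c e + h3 k f3 a (h2 k A.l2 b c) e -
        h3 k f3 b (h2 k A.l2 a c) e - h3 k f3 a b (h2 k A.l2 c e) + h3 k f3 a c (h2 k A.l2 b e) -
        h3 k f3 b c (h2 k A.l2 a e) + h2 k B.l2 (h3 k f3 a b c) (h1 k f1 e) +
        h2 k B.l2 (h1 k f1 a) (h3 k f3 b c e) - h2 k B.l2 (h1 k f1 b) (h3 k f3 a c e) +
        h2 k B.l2 (h1 k f1 c) (h3 k f3 a b e) - h2 k B.l2 (h2 k f2 a b) (h2 k f2 c e) +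
        h2 k B.l2 (h2 k f2 a c) (h2 k f2 b e) - h2 k B.l2 (h2 k f2 b c) (h2 k f2 a e) +
        h3 k B.l3 (h2 k f2 a b) (h1 k f1 c) (h1 k f1 e) -
        h3 k B.l3 (h1 k f1 a) (h2 k f2 b c) (h1 k f1 e) +
        h3 k B.l3 (h1 k f1 b) (h2 k f2 a c) (h1 k f1 e) +
        h3 k B.l3 (h1 k f1 a) (h1 k f1 b) (h2 k f2 c e) -
        h3 k B.l3 (h1 k f1 a) (h1 k f1 c) (h2 k f2 b e) +
        h3 k B.l3 (h1 k f1 b) (h1 k f1 c) (h2 k f2 a e) := by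
  have key (d x) : ev (fc1 2 f1 A.l4 - fc4 2 B.l4 f1 f1 f1 f1) d x =
      ev (pc 2 0 1 f2 A.l3 + pc 2 1 0 f2 A.l3 - pa (P12 4) (pc 2 1 0 f2 A.l3)
        + pa (P123 4) (pc 2 1 0 f2 A.l3) - pc 2 0 2 f3 A.l2 + pc 2 1 1 f3 A.l2
        - pa (P12 4) (pc 2 1 1 f3 A.l2) - pc 2 2 0 f3 A.l2 + pa (P23 4) (pc 2 2 0 f3 A.l2)
        - pa (P132 4) (pc 2 2 0 f3 A.l2) + fc2 2 B.l2 f3 f1 + fc2 2 B.l2 f1 f3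
        - pa (P12 4) (fc2 2 B.l2 f1 f3) + pa (P123 4) (fc2 2 B.l2 f1 f3)
        - fc2 2 B.l2 f2 f2 + pa (P23 4) (fc2 2 B.l2 f2 f2) - pa (P132 4) (fc2 2 B.l2 f2 f2)
        + fc3 2 B.l3 f2 f1 f1 - fc3 2 B.l3 f1 f2 f1 + pa (P12 4) (fc3 2 B.l3 f1 f2 f1)
        + fc3 2 B.l3 f1 f1 f2 - pa (P23 4) (fc3 2 B.l3 f1 f1 f2)
        + pa (P132 4) (fc3 2 B.l3 f1 f1 f2)) d x ↔
      h1 k f1 (h4 k A.l4 (tup d x 0) (tup d x 1) (tup d x 2) (tup d x 3)) -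
        h4 k B.l4 (h1 k f1 (tup d x 0)) (h1 k f1 (tup d x 1)) (h1 k f1 (tup d x 2))
          (h1 k f1 (tup d x 3)) =
        h2 k f2 (h3 k A.l3 (tup d x 0) (tup d x 1) (tup d x 2)) (tup d x 3) +
        sg (d 0) • h2 k f2 (tup d x 0) (h3 k A.l3 (tup d x 1) (tup d x 2) (tup d x 3)) -
        koszulSign d (P12 4) • sg (d 1) •
          h2 k f2 (tup d x 1) (h3 k A.l3 (tup d x 0) (tup d x 2) (tup d x 3)) +
        koszulSign d (P123 4) • sg (d 2) •
          h2 k f2 (tup d x 2) (h3 k A.l3 (tup d x 0) (tup d x 1) (tup d x 3)) -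
        h3 k f3 (h2 k A.l2 (tup d x 0) (tup d x 1)) (tup d x 2) (tup d x 3) +
        h3 k f3 (tup d x 0) (h2 k A.l2 (tup d x 1) (tup d x 2)) (tup d x 3) -
        koszulSign d (P12 4) • h3 k f3 (tup d x 1) (h2 k A.l2 (tup d x 0) (tup d x 2)) (tup d x 3) -
        h3 k f3 (tup d x 0) (tup d x 1) (h2 k A.l2 (tup d x 2) (tup d x 3)) +
        koszulSign d (P23 4) • h3 k f3 (tup d x 0) (tup d x 2) (h2 k A.l2 (tup d x 1) (tup d x 3)) -
        koszulSign d (P132 4) •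
          h3 k f3 (tup d x 1) (tup d x 2) (h2 k A.l2 (tup d x 0) (tup d x 3)) +
        h2 k B.l2 (h3 k f3 (tup d x 0) (tup d x 1) (tup d x 2)) (h1 k f1 (tup d x 3)) +
        h2 k B.l2 (h1 k f1 (tup d x 0)) (h3 k f3 (tup d x 1) (tup d x 2) (tup d x 3)) -
        koszulSign d (P12 4) •
          h2 k B.l2 (h1 k f1 (tup d x 1)) (h3 k f3 (tup d x 0) (tup d x 2) (tup d x 3)) +
        koszulSign d (P123 4) •
          h2 k B.l2 (h1 k f1 (tup d x 2)) (h3 k f3 (tup d x 0) (tup d x 1) (tup d x 3)) -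
        sg (d 0 + d 1) •
          h2 k B.l2 (h2 k f2 (tup d x 0) (tup d x 1)) (h2 k f2 (tup d x 2) (tup d x 3)) +
        koszulSign d (P23 4) • sg (d 0 + d 2) •
          h2 k B.l2 (h2 k f2 (tup d x 0) (tup d x 2)) (h2 k f2 (tup d x 1) (tup d x 3)) -
        koszulSign d (P132 4) • sg (d 1 + d 2) •
          h2 k B.l2 (h2 k f2 (tup d x 1) (tup d x 2)) (h2 k f2 (tup d x 0) (tup d x 3)) +
        h3 k B.l3 (h2 k f2 (tup d x 0) (tup d x 1)) (h1 k f1 (tup d x 2)) (h1 k f1 (tup d x 3)) -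
        sg (d 0) •
          h3 k B.l3 (h1 k f1 (tup d x 0)) (h2 k f2 (tup d x 1) (tup d x 2)) (h1 k f1 (tup d x 3)) +
        koszulSign d (P12 4) • sg (d 1) •
          h3 k B.l3 (h1 k f1 (tup d x 1)) (h2 k f2 (tup d x 0) (tup d x 2)) (h1 k f1 (tup d x 3)) +
        sg (d 0 + d 1) •
          h3 k B.l3 (h1 k f1 (tup d x 0)) (h1 k f1 (tup d x 1)) (h2 k f2 (tup d x 2) (tup d x 3)) -
        koszulSign d (P23 4) • sg (d 0 + d 2) •
          h3 k B.l3 (h1 k f1 (tup d x 0)) (h1 k f1 (tup d x 2)) (h2 k f2 (tup d x 1) (tup d x 3)) +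
        koszulSign d (P132 4) • sg (d 1 + d 2) •
          h3 k B.l3 (h1 k f1 (tup d x 1)) (h1 k f1 (tup d x 2)) (h2 k f2 (tup d x 0) (tup d x 3)) := by
    simp only [ev_add, ev_sub, ev_fc1 (k := k), ev_fc2 (k := k), ev_fc3 (k := k), ev_fc4 (k := k),
      ev_pa, ev_pc_0_1 (k := k), ev_pc_1_0 (k := k), ev_pc_0_2 (k := k), ev_pc_1_1 (k := k),
      ev_pc_2_0 (k := k), l1, l2, l3, A.leib.lin2, A.leib.lin3, A.leib.lin4, B.leib.lin2,
      B.leib.lin3, B.leib.lin4, hat_one, hat_two, hat_three, hat_four, zero_mul, one_mul,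
      add_zero, zero_add, sg_zero, sg_two_mul, one_smul, Fin.sum_univ_one, Fin.sum_univ_two]
    rfl
  constructor
  · rintro h _ _ _ _ ⟨a, rfl⟩ ⟨b, rfl⟩ ⟨c, rfl⟩ ⟨e, rfl⟩
    have := (key (fun _ => 0) ![a, b, c, e]).1 (by rw [h])
    simp only [koszulSign_zero, one_smul, sg_zero, add_zero] at this
    exact this
  · intro h
    refine eq_of_degree_two A B (fun d x j hj => ?_) (fun x => ?_)
    · rw [key]
      fin_cases j <;> simp_all
    · rw [key]
      simp only [koszulSign_zero, one_smul, sg_zero, add_zero]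
      exact h _ _ _ _ (.tup _ x 0) (.tup _ x 1) (.tup _ x 2) (.tup _ x 3)

end Equations

/-! ## The composite of two weak morphisms -/

section Composite

variable {k : Type} [CommRing k] {L M N : ℤ → Type}
  [∀ i, AddCommGroup (L i)] [∀ i, Module k (L i)]
  [∀ i, AddCommGroup (M i)] [∀ i, Module k (M i)]
  [∀ i, AddCommGroup (N i)] [∀ i, Module k (N i)]

theorem Hom.h1 {r i : ℤ} {μ : MMap L M 1 r} (hμ : IsMultilinear k μ) {a : Tot L} (ha : Hom i a) :
    Hom (r + i) (h1 k μ a) := by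
  revert i a
  rw [← forall_tup_one fun i a => Hom (r + i) (WL3.h1 k μ a)]
  exact fun d x => ⟨gcast (by rw [Fin.sum_univ_one]) (μ d x), by rw [← ev_one hμ, single_gcast, ev]⟩

theorem Hom.h2 {r i j : ℤ} {μ : MMap L M 2 r} (hμ : IsMultilinear k μ) {a b : Tot L}
    (ha : Hom i a) (hb : Hom j b) : Hom (r + (i + j)) (h2 k μ a b) := by
  revert i j a b
  suffices ∀ i j a b, Hom i a → Hom j b → Hom (r + (i + j)) (WL3.h2 k μ a b) from
    fun {i j a b} => this i j a b
  rw [← forall_tup_two fun i j a b => Hom (r + (i + j)) (WL3.h2 k μ a b)]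
  exact fun d x => ⟨gcast (by rw [Fin.sum_univ_two]) (μ d x), by rw [← ev_two hμ, single_gcast, ev]⟩

theorem Hom.h3 {r i j l : ℤ} {μ : MMap L M 3 r} (hμ : IsMultilinear k μ) {a b c : Tot L}
    (ha : Hom i a) (hb : Hom j b) (hc : Hom l c) : Hom (r + (i + j + l)) (h3 k μ a b c) := by
  revert i j l a b c
  suffices ∀ i j l a b c, Hom i a → Hom j b → Hom l c →
      Hom (r + (i + j + l)) (WL3.h3 k μ a b c) from fun {i j l a b c} => this i j l a b c
  rw [← forall_tup_three fun i j l a b c => Hom (r + (i + j + l)) (WL3.h3 k μ a b c)]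
  exact fun d x => ⟨gcast (by rw [Fin.sum_univ_three]) (μ d x),
    by rw [← ev_three hμ, single_gcast, ev]⟩

theorem WeakLie3.eq_zero_of_hom (A : WeakLie3 k L) {i : ℤ} {v : Tot L} (hv : Hom i v)
    (hi : i < 0 ∨ 2 < i) : v = 0 := by
  obtain ⟨x, rfl⟩ := hv
  rw [A.bound i hi x, DFinsupp.single_zero]

section Ext

variable {W : Type} [AddCommGroup W] [Module k W]

theorem ext_hom_one {g g' : Tot L →ₗ[k] W} (h : ∀ i a, Hom i a → g a = g' a) : g = g' :=
  DFinsupp.lhom_ext fun i x => h i _ ⟨x, rfl⟩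

theorem ext_hom_two {g g' : Tot L →ₗ[k] Tot L →ₗ[k] W}
    (h : ∀ i j a b, Hom i a → Hom j b → g a b = g' a b) (a b) : g a b = g' a b := by
  suffices g = g' by rw [this]
  exact ext_hom_one fun i a ha => ext_hom_one fun j b hb => h i j a b ha hb

end Ext

variable {f1 : MMap L M 1 0} {f2 : MMap L M 2 1} {f21 : MMap L M 2 2} {f3 : MMap L M 3 2}
  {f1' : MMap M N 1 0} {f2' : MMap M N 2 1} {f21' : MMap M N 2 2} {f3' : MMap M N 3 2}

theorem ev_cmp1 (l1' : IsMultilinear k f1') (l1 : IsMultilinear k f1) (d x) :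
    ev (cmp1 f1' f1) d x = h1 k f1' (h1 k f1 (tup d x 0)) := by
  rw [cmp1, ev_fc1 l1' l1, hat_one]

theorem ev_cmp2 (l1' : IsMultilinear k f1') (l2' : IsMultilinear k f2')
    (l1 : IsMultilinear k f1) (l2 : IsMultilinear k f2) (d x) :
    ev (cmp2 f1' f2' f1 f2) d x = h2 k f2' (h1 k f1 (tup d x 0)) (h1 k f1 (tup d x 1)) +
      h1 k f1' (h2 k f2 (tup d x 0) (tup d x 1)) := by
  rw [cmp2, ev_add, ev_fc1 l1' l2, ev_fc2 l2' l1 l1, hat_one, hat_one, hat_two, zero_mul, sg_zero,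
    one_smul]
  rfl

theorem ev_cmp21 (l1' : IsMultilinear k f1') (l21' : IsMultilinear k f21')
    (l1 : IsMultilinear k f1) (l21 : IsMultilinear k f21) (d x) :
    ev (cmp21 f1' f21' f1 f21) d x = h2 k f21' (h1 k f1 (tup d x 0)) (h1 k f1 (tup d x 1)) +
      h1 k f1' (h2 k f21 (tup d x 0) (tup d x 1)) := by
  rw [cmp21, ev_add, ev_fc1 l1' l21, ev_fc2 l21' l1 l1, hat_one, hat_one, hat_two, zero_mul,
    sg_zero, one_smul]
  rfl

theorem ev_cmp3 (l1' : IsMultilinear k f1') (l2' : IsMultilinear k f2')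
    (l3' : IsMultilinear k f3') (l1 : IsMultilinear k f1) (l2 : IsMultilinear k f2)
    (l3 : IsMultilinear k f3) (d x) :
    ev (cmp3 f1' f2' f3' f1 f2 f3) d x =
      h3 k f3' (h1 k f1 (tup d x 0)) (h1 k f1 (tup d x 1)) (h1 k f1 (tup d x 2)) -
      h2 k f2' (h2 k f2 (tup d x 0) (tup d x 1)) (h1 k f1 (tup d x 2)) +
      sg (d 0) • h2 k f2' (h1 k f1 (tup d x 0)) (h2 k f2 (tup d x 1) (tup d x 2)) -
      sg (d 0 * d 1) • sg (d 1) • h2 k f2' (h1 k f1 (tup d x 1)) (h2 k f2 (tup d x 0) (tup d x 2)) +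
      h1 k f1' (h3 k f3 (tup d x 0) (tup d x 1) (tup d x 2)) := by
  simp only [cmp3, ev_add, ev_sub, ev_fc1 (k := k), ev_fc2 (k := k), ev_fc3 (k := k), ev_pa,
    l1', l2', l3', l1, l2, l3, hat_one, hat_two, hat_three, zero_mul, one_mul, add_zero, sg_zero,
    koszulSign_P12_three, Fin.sum_univ_one, one_smul]
  rfl

theorem isMultilinear_cmp1 (l1' : IsMultilinear k f1') (l1 : IsMultilinear k f1) :
    IsMultilinear k (cmp1 f1' f1) := by
  refine isMultilinear_of_ev fun d => ⟨fun X => h1 k f1' (h1 k f1 (X 0)),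
    fun x => ev_cmp1 l1' l1 d x, fun X j => ?_⟩
  fin_cases j
  simp

theorem isMultilinear_cmp2 (l1' : IsMultilinear k f1') (l2' : IsMultilinear k f2')
    (l1 : IsMultilinear k f1) (l2 : IsMultilinear k f2) :
    IsMultilinear k (cmp2 f1' f2' f1 f2) := by
  refine isMultilinear_of_ev fun d => ⟨fun X => h2 k f2' (h1 k f1 (X 0)) (h1 k f1 (X 1)) +
    h1 k f1' (h2 k f2 (X 0) (X 1)), fun x => ev_cmp2 l1' l2' l1 l2 d x, fun X j => ?_⟩
  fin_cases j <;> simp [add_add_add_comm]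

theorem isMultilinear_cmp21 (l1' : IsMultilinear k f1') (l21' : IsMultilinear k f21')
    (l1 : IsMultilinear k f1) (l21 : IsMultilinear k f21) :
    IsMultilinear k (cmp21 f1' f21' f1 f21) := by
  refine isMultilinear_of_ev fun d => ⟨fun X => h2 k f21' (h1 k f1 (X 0)) (h1 k f1 (X 1)) +
    h1 k f1' (h2 k f21 (X 0) (X 1)), fun x => ev_cmp21 l1' l21' l1 l21 d x, fun X j => ?_⟩
  fin_cases j <;> simp [add_add_add_comm]

theorem isMultilinear_cmp3 (l1' : IsMultilinear k f1') (l2' : IsMultilinear k f2')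
    (l3' : IsMultilinear k f3') (l1 : IsMultilinear k f1) (l2 : IsMultilinear k f2)
    (l3 : IsMultilinear k f3) : IsMultilinear k (cmp3 f1' f2' f3' f1 f2 f3) := by
  refine isMultilinear_of_ev fun d => ⟨fun X =>
    h3 k f3' (h1 k f1 (X 0)) (h1 k f1 (X 1)) (h1 k f1 (X 2)) -
      h2 k f2' (h2 k f2 (X 0) (X 1)) (h1 k f1 (X 2)) +
      sg (d 0) • h2 k f2' (h1 k f1 (X 0)) (h2 k f2 (X 1) (X 2)) -
      sg (d 0 * d 1) • sg (d 1) • h2 k f2' (h1 k f1 (X 1)) (h2 k f2 (X 0) (X 2)) +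
      h1 k f1' (h3 k f3 (X 0) (X 1) (X 2)),
    fun x => ev_cmp3 l1' l2' l3' l1 l2 l3 d x, fun X j => ?_⟩
  fin_cases j <;> refine ⟨fun a b => ?_, fun c a => ?_⟩ <;> simp <;> module

theorem h1_cmp1 (l1' : IsMultilinear k f1') (l1 : IsMultilinear k f1) (a) :
    h1 k (cmp1 f1' f1) a = h1 k f1' (h1 k f1 a) := by
  suffices h1 k (cmp1 f1' f1) = h1 k f1' ∘ₗ h1 k f1 by rw [this]; rfl
  refine ext_hom_one ((forall_tup_one fun i a => _ = _).1 fun d x => ?_)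
  rw [← ev_one (isMultilinear_cmp1 l1' l1), ev_cmp1 l1' l1]
  rfl

theorem h2_cmp2 (l1' : IsMultilinear k f1') (l2' : IsMultilinear k f2')
    (l1 : IsMultilinear k f1) (l2 : IsMultilinear k f2) (a b) :
    h2 k (cmp2 f1' f2' f1 f2) a b = h2 k f2' (h1 k f1 a) (h1 k f1 b) + h1 k f1' (h2 k f2 a b) := by
  refine ext_hom_two (g := h2 k (cmp2 f1' f2' f1 f2))
    (g' := (h2 k f2').compl₁₂ (h1 k f1) (h1 k f1) + (h2 k f2).compr₂ (h1 k f1'))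
    ((forall_tup_two fun i j a b => _ = _).1 fun d x => ?_) a b
  rw [← ev_two (isMultilinear_cmp2 l1' l2' l1 l2), ev_cmp2 l1' l2' l1 l2]
  rfl

theorem h2_cmp21 (l1' : IsMultilinear k f1') (l21' : IsMultilinear k f21')
    (l1 : IsMultilinear k f1) (l21 : IsMultilinear k f21) (a b) :
    h2 k (cmp21 f1' f21' f1 f21) a b =
      h2 k f21' (h1 k f1 a) (h1 k f1 b) + h1 k f1' (h2 k f21 a b) := by
  refine ext_hom_two (g := h2 k (cmp21 f1' f21' f1 f21))
    (g' := (h2 k f21').compl₁₂ (h1 k f1) (h1 k f1) + (h2 k f21).compr₂ (h1 k f1'))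
    ((forall_tup_two fun i j a b => _ = _).1 fun d x => ?_) a b
  rw [← ev_two (isMultilinear_cmp21 l1' l21' l1 l21), ev_cmp21 l1' l21' l1 l21]
  rfl

theorem h3_cmp3 (l1' : IsMultilinear k f1') (l2' : IsMultilinear k f2')
    (l3' : IsMultilinear k f3') (l1 : IsMultilinear k f1) (l2 : IsMultilinear k f2)
    (l3 : IsMultilinear k f3) : ∀ i j l a b c, Hom i a → Hom j b → Hom l c →
    h3 k (cmp3 f1' f2' f3' f1 f2 f3) a b c =
      h3 k f3' (h1 k f1 a) (h1 k f1 b) (h1 k f1 c) - h2 k f2' (h2 k f2 a b) (h1 k f1 c) +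
      sg i • h2 k f2' (h1 k f1 a) (h2 k f2 b c) -
      sg (i * j) • sg j • h2 k f2' (h1 k f1 b) (h2 k f2 a c) + h1 k f1' (h3 k f3 a b c) := by
  refine (forall_tup_three fun i j l a b c => _ = _).1 fun d x => ?_
  rw [← ev_three (isMultilinear_cmp3 l1' l2' l3' l1 l2 l3), ev_cmp3 l1' l2' l3' l1 l2 l3]

theorem Hom.of_eq {i j : ℤ} {a : Tot L} (ha : Hom i a) (h : i = j) : Hom j a := h ▸ ha

theorem Hom.h1_zero {i : ℤ} {μ : MMap L M 1 0} (hμ : IsMultilinear k μ) {a : Tot L}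
    (ha : Hom i a) : Hom i (WL3.h1 k μ a) := (ha.h1 hμ).of_eq (zero_add i)

theorem Hom.h2_zero {i j : ℤ} {μ : MMap L M 2 0} (hμ : IsMultilinear k μ) {a b : Tot L}
    (ha : Hom i a) (hb : Hom j b) : Hom (i + j) (WL3.h2 k μ a b) :=
  (ha.h2 hμ hb).of_eq (zero_add _)

variable {A : WeakLie3 k L} {B : WeakLie3 k M} {C : WeakLie3 k N}

theorem IsWeakMorphism.d_map (hf : IsWeakMorphism k A B f1 f2 f21 f3) (a : Tot L) :
    h1 k B.D (h1 k f1 a) = h1 k f1 (h1 k A.D a) := by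
  suffices h1 k B.D ∘ₗ h1 k f1 = h1 k f1 ∘ₗ h1 k A.D from LinearMap.congr_fun this a
  exact ext_hom_one fun i a ha => sub_eq_zero.1 ((m1_iff A B hf.lin1).1 hf.m1 i a ha)

theorem IsWeakMorphism.comp_m1 (hf : IsWeakMorphism k A B f1 f2 f21 f3)
    (hf' : IsWeakMorphism k B C f1' f2' f21' f3') : bd (-1) C.D A.D (cmp1 f1' f1) = 0 := by
  refine (m1_iff A C (isMultilinear_cmp1 hf'.lin1 hf.lin1)).2 fun i a _ => ?_
  rw [h1_cmp1 hf'.lin1 hf.lin1, h1_cmp1 hf'.lin1 hf.lin1, hf'.d_map, hf.d_map, sub_self]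

theorem IsWeakMorphism.comp_m2 (hf : IsWeakMorphism k A B f1 f2 f21 f3)
    (hf' : IsWeakMorphism k B C f1' f2' f21' f3') :
    bd 0 C.D A.D (cmp2 f1' f2' f1 f2) =
      fc1 0 (cmp1 f1' f1) A.l2 - fc2 0 C.l2 (cmp1 f1' f1) (cmp1 f1' f1) := by
  have l1 := hf.lin1; have l2 := hf.lin2; have l1' := hf'.lin1; have l2' := hf'.lin2
  refine (m2_iff A C (isMultilinear_cmp1 l1' l1) (isMultilinear_cmp2 l1' l2' l1 l2)).2
    fun i j a b ha hb => ?_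
  have e := (m2_iff A B l1 l2).1 hf.m2 i j a b ha hb
  have e' := (m2_iff B C l1' l2').1 hf'.m2 i j _ _ (ha.h1_zero l1) (hb.h1_zero l1)
  linear_combination (norm := skip) congrArg (h1 k f1') e + e'
  simp only [h1_cmp1 l1' l1, h2_cmp2 l1' l2' l1 l2, map_add, map_sub, map_zsmul, hf.d_map,
    hf'.d_map, smul_add]
  abel

theorem IsWeakMorphism.comp_m5 (hf : IsWeakMorphism k A B f1 f2 f21 f3)
    (hf' : IsWeakMorphism k B C f1' f2' f21' f3') :
    bd 1 C.D A.D (cmp21 f1' f21' f1 f21) =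
      - cmp2 f1' f2' f1 f2 - pa (P12 2) (cmp2 f1' f2' f1 f2) + fc1 1 (cmp1 f1' f1) A.l21 -
        fc2 1 C.l21 (cmp1 f1' f1) (cmp1 f1' f1) := by
  have l1 := hf.lin1; have l2 := hf.lin2; have l21 := hf.lin21
  have l1' := hf'.lin1; have l2' := hf'.lin2; have l21' := hf'.lin21
  refine (m5_iff A C (isMultilinear_cmp1 l1' l1) (isMultilinear_cmp2 l1' l2' l1 l2)
    (isMultilinear_cmp21 l1' l21' l1 l21)).2 fun i j a b ha hb => ?_
  have e := (m5_iff A B l1 l2 l21).1 hf.m5 i j a b ha hb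
  have e' := (m5_iff B C l1' l2' l21').1 hf'.m5 i j _ _ (ha.h1_zero l1) (hb.h1_zero l1)
  linear_combination (norm := skip) congrArg (h1 k f1') e + e'
  simp only [h1_cmp1 l1' l1, h2_cmp2 l1' l2' l1 l2, h2_cmp21 l1' l21' l1 l21, map_add, map_sub,
    map_neg, map_zsmul, hf.d_map, hf'.d_map, smul_add]
  abel

theorem IsWeakMorphism.comp_m6 (hf : IsWeakMorphism k A B f1 f2 f21 f3)
    (hf' : IsWeakMorphism k B C f1' f2' f21' f3') :
    fc1 2 (cmp1 f1' f1) A.l211 - fc2 2 C.l211 (cmp1 f1' f1) (cmp1 f1' f1) =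
      cmp21 f1' f21' f1 f21 - pa (P12 2) (cmp21 f1' f21' f1 f21) := by
  have l1 := hf.lin1; have l21 := hf.lin21; have l1' := hf'.lin1; have l21' := hf'.lin21
  refine (m6_iff A C (isMultilinear_cmp1 l1' l1)
    (isMultilinear_cmp21 l1' l21' l1 l21)).2 fun a b ha hb => ?_
  have e := (m6_iff A B l1 l21).1 hf.m6 a b ha hb
  have e' := (m6_iff B C l1' l21').1 hf'.m6 _ _ (ha.h1_zero l1) (hb.h1_zero l1)
  linear_combination (norm := skip) congrArg (h1 k f1') e + e'
  simp only [h1_cmp1 l1' l1, h2_cmp21 l1' l21' l1 l21, map_sub]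
  abel

theorem IsWeakMorphism.comp_m3 (hf : IsWeakMorphism k A B f1 f2 f21 f3)
    (hf' : IsWeakMorphism k B C f1' f2' f21' f3') :
    bd 1 C.D A.D (cmp3 f1' f2' f3' f1 f2 f3) =
      fc1 1 (cmp1 f1' f1) A.l3 - pc 1 1 0 (cmp2 f1' f2' f1 f2) A.l2 +
        pc 1 0 1 (cmp2 f1' f2' f1 f2) A.l2 + pa (P12 3) (pc 1 1 0 (cmp2 f1' f2' f1 f2) A.l2) -
        fc3 1 C.l3 (cmp1 f1' f1) (cmp1 f1' f1) (cmp1 f1' f1) -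
        fc2 1 C.l2 (cmp1 f1' f1) (cmp2 f1' f2' f1 f2) +
        fc2 1 C.l2 (cmp2 f1' f2' f1 f2) (cmp1 f1' f1) +
        pa (P12 3) (fc2 1 C.l2 (cmp1 f1' f1) (cmp2 f1' f2' f1 f2)) := by
  have l1 := hf.lin1; have l2 := hf.lin2; have l3 := hf.lin3
  have l1' := hf'.lin1; have l2' := hf'.lin2; have l3' := hf'.lin3
  refine (m3_iff A C (isMultilinear_cmp1 l1' l1) (isMultilinear_cmp2 l1' l2' l1 l2)
    (isMultilinear_cmp3 l1' l2' l3' l1 l2 l3)).2 fun i j l a b c ha hb hc => ?_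
  have e2 := (m2_iff A B l1 l2).1 hf.m2
  have e2' := (m2_iff B C l1' l2').1 hf'.m2
  have e3 := (m3_iff A B l1 l2 l3).1 hf.m3 i j l a b c ha hb hc
  have e3' := (m3_iff B C l1' l2' l3').1 hf'.m3 i j l _ _ _ (ha.h1_zero l1) (hb.h1_zero l1)
    (hc.h1_zero l1)
  rw [h3_cmp3 l1' l2' l3' l1 l2 l3 i j l a b c ha hb hc,
    h3_cmp3 l1' l2' l3' l1 l2 l3 _ j l _ b c (ha.h1 A.linD) hb hc,
    h3_cmp3 l1' l2' l3' l1 l2 l3 i _ l a _ c ha (hb.h1 A.linD) hc,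
    h3_cmp3 l1' l2' l3' l1 l2 l3 i j _ a b _ ha hb (hc.h1 A.linD)]
  linear_combination (norm := skip) congrArg (h1 k f1') e3 + e3' -
    e2' _ _ _ _ (ha.h2 l2 hb) (hc.h1_zero l1) +
    sg i • e2' _ _ _ _ (ha.h1_zero l1) (hb.h2 l2 hc) -
    sg (i * j) • sg j • e2' _ _ _ _ (hb.h1_zero l1) (ha.h2 l2 hc) +
    congrArg (fun x => h2 k f2' x (h1 k f1 c)) (e2 i j a b ha hb) -
    congrArg (h2 k f2' (h1 k f1 a)) (e2 j l b c hb hc) +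
    sg (i * j) • congrArg (h2 k f2' (h1 k f1 b)) (e2 i l a c ha hc)
  simp only [h1_cmp1 l1' l1, h2_cmp2 l1' l2' l1 l2, map_add, map_sub, map_zsmul, hf.d_map,
    hf'.d_map, smul_add, smul_sub, LinearMap.add_apply, LinearMap.sub_apply, LinearMap.smul_apply,
    mul_add, add_mul, sg_add, sg_neg, sg_one, mul_neg, neg_mul, mul_one, one_mul]
  rcases sg_eq_or i with hi | hi <;> rcases sg_eq_or j with hj | hj <;>
  rcases sg_eq_or (i * j) with hij | hij <;> simp only [hi, hj, hij] <;> abel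

theorem WeakLie3.d_eq_zero (A : WeakLie3 k L) {a : Tot L} (ha : Hom 0 a) : h1 k A.D a = 0 :=
  A.eq_zero_of_hom (ha.h1 A.linD) (.inl (by norm_num))

theorem IsWeakMorphism.comp_m7 (hf : IsWeakMorphism k A B f1 f2 f21 f3)
    (hf' : IsWeakMorphism k B C f1' f2' f21' f3') :
    fc1 2 (cmp1 f1' f1) A.l31 - fc3 2 C.l31 (cmp1 f1' f1) (cmp1 f1' f1) (cmp1 f1' f1) =
      cmp3 f1' f2' f3' f1 f2 f3 + pa (P12 3) (cmp3 f1' f2' f3' f1 f2 f3) +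
        pc 2 0 1 (cmp2 f1' f2' f1 f2) A.l21 +
        fc2 2 C.l2 (cmp21 f1' f21' f1 f21) (cmp1 f1' f1) := by
  have l1 := hf.lin1; have l2 := hf.lin2; have l21 := hf.lin21; have l3 := hf.lin3
  have l1' := hf'.lin1; have l2' := hf'.lin2; have l21' := hf'.lin21; have l3' := hf'.lin3
  refine (m7_iff A C (isMultilinear_cmp1 l1' l1) (isMultilinear_cmp2 l1' l2' l1 l2)
    (isMultilinear_cmp21 l1' l21' l1 l21) (isMultilinear_cmp3 l1' l2' l3' l1 l2 l3)).2
    fun a b c ha hb hc => ?_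
  have ha' := ha.h1_zero l1; have hb' := hb.h1_zero l1; have hc' := hc.h1_zero l1
  have e2' := (m2_iff B C l1' l2').1 hf'.m2 _ _ _ _ (ha.h2 l21 hb) hc'
  have e5 := (m5_iff A B l1 l2 l21).1 hf.m5 0 0 a b ha hb
  have e7 := (m7_iff A B l1 l2 l21 l3).1 hf.m7 a b c ha hb hc
  have e7' := (m7_iff B C l1' l2' l21' l3').1 hf'.m7 _ _ _ ha' hb' hc'
  have z := C.eq_zero_of_hom ((ha.h2 l21 hb).h2 l2' hc') (.inr (by norm_num))
  rw [h3_cmp3 l1' l2' l3' l1 l2 l3 0 0 0 a b c ha hb hc,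
    h3_cmp3 l1' l2' l3' l1 l2 l3 0 0 0 b a c hb ha hc]
  linear_combination (norm := skip) congrArg (h1 k f1') e7 + e7' - e2' +
    congrArg (fun x => h2 k f2' x (h1 k f1 c)) e5
  simp only [h1_cmp1 l1' l1, h2_cmp2 l1' l2' l1 l2, h2_cmp21 l1' l21' l1 l21, map_add, map_sub,
    map_neg, map_zero, z, hf.d_map, A.d_eq_zero ha, A.d_eq_zero hb, A.d_eq_zero hc,
    LinearMap.add_apply, LinearMap.sub_apply, LinearMap.neg_apply, LinearMap.zero_apply,
    mul_zero, add_zero, sg_zero, smul_zero, one_smul]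
  abel

theorem IsWeakMorphism.comp_m8 (hf : IsWeakMorphism k A B f1 f2 f21 f3)
    (hf' : IsWeakMorphism k B C f1' f2' f21' f3') :
    fc1 2 (cmp1 f1' f1) A.l32 - fc3 2 C.l32 (cmp1 f1' f1) (cmp1 f1' f1) (cmp1 f1' f1) =
      cmp3 f1' f2' f3' f1 f2 f3 + pa (P23 3) (cmp3 f1' f2' f3' f1 f2 f3) -
        pc 2 1 0 (cmp2 f1' f2' f1 f2) A.l21 + pc 2 0 1 (cmp21 f1' f21' f1 f21) A.l2 +
        pa (P12 3) (pc 2 1 0 (cmp21 f1' f21' f1 f21) A.l2) -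
        fc2 2 C.l2 (cmp1 f1' f1) (cmp21 f1' f21' f1 f21) -
        fc2 2 C.l21 (cmp2 f1' f2' f1 f2) (cmp1 f1' f1) -
        pa (P12 3) (fc2 2 C.l21 (cmp1 f1' f1) (cmp2 f1' f2' f1 f2)) := by
  have l1 := hf.lin1; have l2 := hf.lin2; have l21 := hf.lin21; have l3 := hf.lin3
  have l1' := hf'.lin1; have l2' := hf'.lin2; have l21' := hf'.lin21; have l3' := hf'.lin3
  refine (m8_iff A C (isMultilinear_cmp1 l1' l1) (isMultilinear_cmp2 l1' l2' l1 l2)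
    (isMultilinear_cmp21 l1' l21' l1 l21) (isMultilinear_cmp3 l1' l2' l3' l1 l2 l3)).2
    fun a b c ha hb hc => ?_
  have ha' := ha.h1_zero l1; have hb' := hb.h1_zero l1; have hc' := hc.h1_zero l1
  have e2 := (m2_iff A B l1 l2).1 hf.m2
  have e2' := (m2_iff B C l1' l2').1 hf'.m2 _ _ _ _ ha' (hb.h2 l21 hc)
  have e5 := (m5_iff A B l1 l2 l21).1 hf.m5 0 0 b c hb hc
  have e5' := (m5_iff B C l1' l2' l21').1 hf'.m5
  have e8 := (m8_iff A B l1 l2 l21 l3).1 hf.m8 a b c ha hb hc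
  have e8' := (m8_iff B C l1' l2' l21' l3').1 hf'.m8 _ _ _ ha' hb' hc'
  have z := C.eq_zero_of_hom (ha'.h2 l2' (hb.h2 l21 hc)) (.inr (by norm_num))
  have z₁ := C.eq_zero_of_hom ((ha.h2 l2 hb).h2 l21' hc') (.inr (by norm_num))
  have z₂ := C.eq_zero_of_hom (hb'.h2 l21' (ha.h2 l2 hc)) (.inr (by norm_num))
  rw [h3_cmp3 l1' l2' l3' l1 l2 l3 0 0 0 a b c ha hb hc,
    h3_cmp3 l1' l2' l3' l1 l2 l3 0 0 0 a c b ha hc hb]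
  linear_combination (norm := skip) congrArg (h1 k f1') e8 + e8' + e2' -
    congrArg (h2 k f2' (h1 k f1 a)) e5 +
    congrArg (fun x => h2 k f21' x (h1 k f1 c)) (e2 0 0 a b ha hb) +
    congrArg (h2 k f21' (h1 k f1 b)) (e2 0 0 a c ha hc) +
    e5' _ _ _ _ (ha.h2 l2 hb) hc' + e5' _ _ _ _ hb' (ha.h2 l2 hc)
  simp only [h1_cmp1 l1' l1, h2_cmp2 l1' l2' l1 l2, h2_cmp21 l1' l21' l1 l21, map_add, map_sub,
    map_neg, map_zero, z, z₁, z₂, hf.d_map, A.d_eq_zero ha, A.d_eq_zero hb, A.d_eq_zero hc,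
    LinearMap.add_apply, LinearMap.sub_apply, LinearMap.zero_apply,
    mul_zero, zero_mul, add_zero, sg_zero, smul_zero, one_smul]
  abel

theorem IsWeakMorphism.d_f2 (hf : IsWeakMorphism k A B f1 f2 f21 f3) {a b : Tot L}
    (ha : Hom 0 a) (hb : Hom 0 b) :
    h1 k B.D (h2 k f2 a b) = h1 k f1 (h2 k A.l2 a b) - h2 k B.l2 (h1 k f1 a) (h1 k f1 b) := by
  simpa [A.d_eq_zero ha, A.d_eq_zero hb] using
    (m2_iff A B hf.lin1 hf.lin2).1 hf.m2 0 0 a b ha hb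

theorem IsWeakMorphism.d_f3 (hf : IsWeakMorphism k A B f1 f2 f21 f3) {a b c : Tot L}
    (ha : Hom 0 a) (hb : Hom 0 b) (hc : Hom 0 c) :
    h1 k B.D (h3 k f3 a b c) =
      h1 k f1 (h3 k A.l3 a b c) - h2 k f2 a (h2 k A.l2 b c) + h2 k f2 (h2 k A.l2 a b) c +
        h2 k f2 b (h2 k A.l2 a c) - h3 k B.l3 (h1 k f1 a) (h1 k f1 b) (h1 k f1 c) -
        h2 k B.l2 (h1 k f1 a) (h2 k f2 b c) + h2 k B.l2 (h2 k f2 a b) (h1 k f1 c) +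
        h2 k B.l2 (h1 k f1 b) (h2 k f2 a c) := by
  simpa [A.d_eq_zero ha, A.d_eq_zero hb, A.d_eq_zero hc] using
    (m3_iff A B hf.lin1 hf.lin2 hf.lin3).1 hf.m3 0 0 0 a b c ha hb hc

theorem IsWeakMorphism.comp_m4 (hf : IsWeakMorphism k A B f1 f2 f21 f3)
    (hf' : IsWeakMorphism k B C f1' f2' f21' f3') {g1 : MMap L N 1 0} {g2 : MMap L N 2 1}
    {g3 : MMap L N 3 2} (hg1 : g1 = cmp1 f1' f1) (hg2 : g2 = cmp2 f1' f2' f1 f2)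
    (hg3 : g3 = cmp3 f1' f2' f3' f1 f2 f3) :
    fc1 2 g1 A.l4 - fc4 2 C.l4 g1 g1 g1 g1 =
        pc 2 0 1 g2 A.l3 + pc 2 1 0 g2 A.l3 - pa (P12 4) (pc 2 1 0 g2 A.l3)
        + pa (P123 4) (pc 2 1 0 g2 A.l3) - pc 2 0 2 g3 A.l2 + pc 2 1 1 g3 A.l2
        - pa (P12 4) (pc 2 1 1 g3 A.l2) - pc 2 2 0 g3 A.l2 + pa (P23 4) (pc 2 2 0 g3 A.l2)
        - pa (P132 4) (pc 2 2 0 g3 A.l2) + fc2 2 C.l2 g3 g1 + fc2 2 C.l2 g1 g3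
        - pa (P12 4) (fc2 2 C.l2 g1 g3) + pa (P123 4) (fc2 2 C.l2 g1 g3)
        - fc2 2 C.l2 g2 g2 + pa (P23 4) (fc2 2 C.l2 g2 g2) - pa (P132 4) (fc2 2 C.l2 g2 g2)
        + fc3 2 C.l3 g2 g1 g1 - fc3 2 C.l3 g1 g2 g1 + pa (P12 4) (fc3 2 C.l3 g1 g2 g1)
        + fc3 2 C.l3 g1 g1 g2 - pa (P23 4) (fc3 2 C.l3 g1 g1 g2)
        + pa (P132 4) (fc3 2 C.l3 g1 g1 g2) := by
  subst hg1 hg2 hg3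
  have l1 := hf.lin1; have l2 := hf.lin2; have l3 := hf.lin3
  have l1' := hf'.lin1; have l2' := hf'.lin2; have l3' := hf'.lin3
  refine (m4_iff A C (isMultilinear_cmp1 l1' l1) (isMultilinear_cmp2 l1' l2' l1 l2)
    (isMultilinear_cmp3 l1' l2' l3' l1 l2 l3)).2 fun a b c e ha hb hc he => ?_
  have ha' := ha.h1_zero l1; have hb' := hb.h1_zero l1
  have hc' := hc.h1_zero l1; have he' := he.h1_zero l1
  have e2' := (m2_iff B C l1' l2').1 hf'.m2
  have e3' := (m3_iff B C l1' l2' l3').1 hf'.m3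
  have e4 := (m4_iff A B l1 l2 l3).1 hf.m4 a b c e ha hb hc he
  have e4' := (m4_iff B C l1' l2' l3').1 hf'.m4 _ _ _ _ ha' hb' hc' he'
  have z {i j : ℤ} {x y : Tot M} (hx : Hom i x) (hy : Hom j y) (hij : i + j = 2) :
      h2 k f2' x y = 0 :=
    C.eq_zero_of_hom (hx.h2 l2' hy) (.inr (by omega))
  have z' {i j l : ℤ} {x y w : Tot M} (hx : Hom i x) (hy : Hom j y) (hw : Hom l w)
      (hij : i + j + l = 1) : h3 k f3' x y w = 0 :=
    C.eq_zero_of_hom (hx.h3 l3' hy hw) (.inr (by omega))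
  have c3 {x y w : Tot L} (hx : Hom 0 x) (hy : Hom 0 y) (hw : Hom 0 w) :=
    h3_cmp3 l1' l2' l3' l1 l2 l3 0 0 0 x y w hx hy hw
  have hl {x y : Tot L} (hx : Hom 0 x) (hy : Hom 0 y) : Hom 0 (h2 k A.l2 x y) :=
    hx.h2_zero A.leib.lin2 hy
  rw [c3 (hl ha hb) hc he, c3 ha (hl hb hc) he, c3 hb (hl ha hc) he, c3 ha hb (hl hc he),
    c3 ha hc (hl hb he), c3 hb hc (hl ha he), c3 ha hb hc, c3 hb hc he, c3 ha hc he, c3 ha hb he]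
  linear_combination (norm := skip) congrArg (h1 k f1') e4 + e4' +
    congrArg (fun x => h2 k f2' x (h1 k f1 e)) (hf.d_f3 ha hb hc) +
    congrArg (h2 k f2' (h1 k f1 a)) (hf.d_f3 hb hc he) -
    congrArg (h2 k f2' (h1 k f1 b)) (hf.d_f3 ha hc he) +
    congrArg (h2 k f2' (h1 k f1 c)) (hf.d_f3 ha hb he) -
    e2' _ _ _ _ (ha.h3 l3 hb hc) he' - e2' _ _ _ _ ha' (hb.h3 l3 hc he) +
    e2' _ _ _ _ hb' (ha.h3 l3 hc he) - e2' _ _ _ _ hc' (ha.h3 l3 hb he) -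
    congrArg (fun x => h3 k f3' x (h1 k f1 c) (h1 k f1 e)) (hf.d_f2 ha hb) +
    congrArg (fun x => h3 k f3' (h1 k f1 a) x (h1 k f1 e)) (hf.d_f2 hb hc) -
    congrArg (fun x => h3 k f3' (h1 k f1 b) x (h1 k f1 e)) (hf.d_f2 ha hc) -
    congrArg (h3 k f3' (h1 k f1 a) (h1 k f1 b)) (hf.d_f2 hc he) +
    congrArg (h3 k f3' (h1 k f1 a) (h1 k f1 c)) (hf.d_f2 hb he) -
    congrArg (h3 k f3' (h1 k f1 b) (h1 k f1 c)) (hf.d_f2 ha he) -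
    e3' _ _ _ _ _ _ (ha.h2 l2 hb) hc' he' + e3' _ _ _ _ _ _ ha' (hb.h2 l2 hc) he' -
    e3' _ _ _ _ _ _ hb' (ha.h2 l2 hc) he' - e3' _ _ _ _ _ _ ha' hb' (hc.h2 l2 he) +
    e3' _ _ _ _ _ _ ha' hc' (hb.h2 l2 he) - e3' _ _ _ _ _ _ hb' hc' (ha.h2 l2 he) -
    congrArg (fun x => h2 k f2' x (h2 k f2 c e)) (hf.d_f2 ha hb) +
    congrArg (h2 k f2' (h2 k f2 a b)) (hf.d_f2 hc he) +
    e2' _ _ _ _ (ha.h2 l2 hb) (hc.h2 l2 he) -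
    congrArg (fun x => h2 k f2' x (h2 k f2 a e)) (hf.d_f2 hb hc) +
    congrArg (h2 k f2' (h2 k f2 b c)) (hf.d_f2 ha he) +
    e2' _ _ _ _ (hb.h2 l2 hc) (ha.h2 l2 he) +
    congrArg (fun x => h2 k f2' x (h2 k f2 b e)) (hf.d_f2 ha hc) -
    congrArg (h2 k f2' (h2 k f2 a c)) (hf.d_f2 hb he) -
    e2' _ _ _ _ (ha.h2 l2 hc) (hb.h2 l2 he)
  have da := A.d_eq_zero ha; have db := A.d_eq_zero hb
  have dc := A.d_eq_zero hc; have de := A.d_eq_zero he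
  simp only [z (ha.h3 l3 hb hc) he' rfl, z ha' (hb.h3 l3 hc he) rfl, z hb' (ha.h3 l3 hc he) rfl,
    z hc' (ha.h3 l3 hb he) rfl, z' (ha.h2 l2 hb) hc' he' rfl, z' ha' (hb.h2 l2 hc) he' rfl,
    z' hb' (ha.h2 l2 hc) he' rfl, z' ha' hb' (hc.h2 l2 he) rfl, z' ha' hc' (hb.h2 l2 he) rfl,
    z' hb' hc' (ha.h2 l2 he) rfl, z (ha.h2 l2 hb) (hc.h2 l2 he) rfl,
    z (hb.h2 l2 hc) (ha.h2 l2 he) rfl, z (ha.h2 l2 hc) (hb.h2 l2 he) rfl,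
    h1_cmp1 l1' l1, h2_cmp2 l1' l2' l1 l2, map_add, map_sub, map_zero, hf.d_map, da, db, dc, de,
    LinearMap.add_apply, LinearMap.sub_apply, LinearMap.zero_apply, mul_zero, mul_one,
    add_zero, zero_add, sg_zero, sg_one, smul_zero, neg_smul, one_smul]
  abel

end Composite

end WL3

namespace WL3

/-- **Composition of weak morphisms is a weak morphism**: for weak morphisms
`f : (L,d,λ) → (L',d',λ')` and `f' : (L',d',λ') → (L'',d'',λ'')` of weak Lie 3-algebras,
the composite with components `(f'∘f)1 = f1'∘f1`, `(f'∘f)2 = f2'∘(f1,f1) + f1'∘f2`,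
`(f'∘f)21 = f21'∘(f1,f1) + f1'∘f21` and
`(f'∘f)3 = f3'∘(f1,f1,f1) - f2'∘(f2,f1) + f2'∘(f1,f2) - f2'∘(f1,f2)^{(12)} + f1'∘f3`
satisfies equations (M1)–(M8), i.e. is a weak morphism `(L,d,λ) → (L'',d'',λ'')`. -/
theorem composition_of_weak_morphisms
    (k : Type) [CommRing k]
    {L M N : ℤ → Type} [∀ i, AddCommGroup (L i)] [∀ i, Module k (L i)]
    [∀ i, AddCommGroup (M i)] [∀ i, Module k (M i)]
    [∀ i, AddCommGroup (N i)] [∀ i, Module k (N i)]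
    (A : WeakLie3 k L) (B : WeakLie3 k M) (C : WeakLie3 k N)
    (f1 : MMap L M 1 0) (f2 : MMap L M 2 1) (f21 : MMap L M 2 2) (f3 : MMap L M 3 2)
    (hf : IsWeakMorphism k A B f1 f2 f21 f3)
    (f1' : MMap M N 1 0) (f2' : MMap M N 2 1) (f21' : MMap M N 2 2) (f3' : MMap M N 3 2)
    (hf' : IsWeakMorphism k B C f1' f2' f21' f3') :
    IsWeakMorphism k A C (cmp1 f1' f1) (cmp2 f1' f2' f1 f2) (cmp21 f1' f21' f1 f21)
      (cmp3 f1' f2' f3' f1 f2 f3) := by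
  exact
    { lin1 := isMultilinear_cmp1 hf'.lin1 hf.lin1
      lin2 := isMultilinear_cmp2 hf'.lin1 hf'.lin2 hf.lin1 hf.lin2
      lin21 := isMultilinear_cmp21 hf'.lin1 hf'.lin21 hf.lin1 hf.lin21
      lin3 := isMultilinear_cmp3 hf'.lin1 hf'.lin2 hf'.lin3 hf.lin1 hf.lin2 hf.lin3
      m1 := hf.comp_m1 hf'
      m2 := hf.comp_m2 hf'
      m3 := hf.comp_m3 hf'
      m4 := hf.comp_m4 hf' rfl rfl rfl
      m5 := hf.comp_m5 hf'
      m6 := hf.comp_m6 hf'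
      m7 := hf.comp_m7 hf'
      m8 := hf.comp_m8 hf' }

end WL3
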